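/- arXiv:0801.2856 — 2 statements merged into one kernel-verified Lean document; each statement's English description precedes it below -/
import Mathlib

section
/- Let Γ be a completed primitive simple graph whose vertex set is partitioned as V = V₁ ⊔ V₂ ⊔ {a,b,c} with V₁ and V₂ nonempty and with no edge of Γ joining V₁ to V₂ (so that removing the three vertices a, b, c disconnects Γ). Then each of the vertices a, b, c has exactly two neighbours in V₁ and exactly two neighbours in V₂; in particular there are no edges of Γ among a, b, c. Moreover, for i = 1, 2, the graph Γᵢ on the vertex set Vᵢ ∪ {a,b,c} whose edges are the edges of Γ having at least one endpoint in Vᵢ together with the three additional edges ab, bc, ca, is a completed primitive 4-regular graph. -/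
/-!
In a graph whose degrees are all even, every edge cut is even: the cut of `A` is the sum of the
degrees in `A` minus twice the number of edges inside `A`. So in a completed primitive graph a cut
with at least two vertices on both sides has at least six edges. With `T = {a, b, c}`, the edges
leaving `V₁` or `V₂` all end in `T`, where the degrees add up to `12 = 6 + 6`; hence both cuts have
exactly six edges and `T` is independent. Adding `t ∈ T` to `Vᵢ` changes the cut by `4` minus twice
the number of neighbours of `t` in `Vᵢ`, and the result is again at least `6`, so `t` has at most
two neighbours in each of `V₁`, `V₂`, hence exactly two.

The glued graph is 4-regular, because the triangle gives back to each `t ∈ T` the two neighbours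
lost on the other side. One side `B` of any cut of it contains at most one vertex of `T`, so `G` and
the glued graph have the same edges inside `B`; as both are 4-regular, the cuts of `B` in the two
graphs have the same size.
-/

open scoped Classical

/-- The set of edges of `G` with one endpoint in `A` and the other outside `A`. -/
noncomputable def cutEdges {V : Type*} [Fintype V] (G : SimpleGraph V) (A : Finset V) :
    Finset (Sym2 V) :=
  G.edgeFinset.filter (fun e => ∃ x, x ∈ e ∧ x ∈ A ∧ ∃ y, y ∈ e ∧ y ∉ A)

/-- A finite simple graph is *completed primitive* if it is 4-regular, connected, has at
least 3 vertices, and every edge cut separating two parts with at least two vertices each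
has size strictly greater than 4. -/
def CompletedPrimitive {V : Type*} [Fintype V] (G : SimpleGraph V) : Prop :=
  (∀ v : V, G.degree v = 4) ∧ G.Connected ∧ 3 ≤ Fintype.card V ∧
    ∀ A : Finset V, 2 ≤ A.card → 2 ≤ Aᶜ.card → 4 < (cutEdges G A).card

/-- The graph consisting of the edges of `G` with at least one endpoint in `Vi`, together
with the triangle edges among `a`, `b`, `c`. -/
noncomputable def splitGlue {V : Type*} (G : SimpleGraph V) (Vi : Finset V) (a b c : V) :
    SimpleGraph V :=
  SimpleGraph.fromRel (fun x y =>
    (G.Adj x y ∧ (x ∈ Vi ∨ y ∈ Vi)) ∨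
      ((x = a ∨ x = b ∨ x = c) ∧ (y = a ∨ y = b ∨ y = c)))

open Finset

lemma card_map_inter_le_or_card_map_compl_inter_le {V W : Type*} [Fintype W] (f : W ↪ V)
    {T : Finset V} {k : ℕ} (hT : #T ≤ 2 * k + 1) (B : Finset W) :
    #(B.map f ∩ T) ≤ k ∨ #(Bᶜ.map f ∩ T) ≤ k := by
  have hdisj : Disjoint (B.map f ∩ T) (Bᶜ.map f ∩ T) :=
    ((disjoint_map f).2 disjoint_compl_right).mono inter_subset_left inter_subset_left
  have hle : #(B.map f ∩ T ∪ Bᶜ.map f ∩ T) ≤ #T :=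
    card_le_card (union_subset inter_subset_right inter_subset_right)
  rw [card_union_of_disjoint hdisj] at hle
  omega

section Cuts

variable {V : Type*} (G : SimpleGraph V)

lemma card_interedges_eq_sum (A B : Finset V) :
    #(G.interedges A B) = ∑ x ∈ A, #{y ∈ B | G.Adj x y} := by
  simp only [SimpleGraph.interedges_def, card_filter, sum_product]

lemma card_interedges_insert_self {A : Finset V} {t : V} (ht : t ∉ A) :
    #(G.interedges (insert t A) (insert t A)) =
      #(G.interedges A A) + 2 * #{x ∈ A | G.Adj t x} := by
  simp only [card_interedges_eq_sum, card_filter, sum_insert ht, sum_add_distrib,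
    G.adj_comm _ t, G.irrefl, if_false]
  ring

lemma even_card_interedges_self (A : Finset V) : Even #(G.interedges A A) := by
  induction A using Finset.induction_on with
  | empty => simp
  | insert t A ht ih =>
    rw [card_interedges_insert_self G ht]
    exact ih.add (even_two_mul _)

variable [Fintype V]

lemma cutEdges_compl (A : Finset V) : cutEdges G Aᶜ = cutEdges G A := by
  ext e
  simp only [cutEdges, mem_filter, mem_compl, not_not]
  exact and_congr_right fun _ => ⟨fun ⟨x, hx, hxA, y, hy, hyA⟩ => ⟨y, hy, hyA, x, hx, hxA⟩,
    fun ⟨x, hx, hxA, y, hy, hyA⟩ => ⟨y, hy, hyA, x, hx, hxA⟩⟩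

lemma card_cutEdges_eq_card_interedges_compl (A : Finset V) :
    #(cutEdges G A) = #(G.interedges A Aᶜ) := by
  have himage : cutEdges G A = (G.interedges A Aᶜ).image fun p => s(p.1, p.2) := by
    ext e
    induction e with | h x y => ?_
    have := G.adj_comm x y
    simp only [cutEdges, mem_filter, SimpleGraph.mem_edgeFinset, SimpleGraph.mem_edgeSet,
      mem_image, SimpleGraph.mem_interedges_iff, mem_compl, Prod.exists, Sym2.mem_iff, Sym2.eq_iff]
    grind
  rw [himage, card_image_of_injOn]
  rintro ⟨x, y⟩ hxy ⟨x', y'⟩ hxy' heq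
  simp only [SimpleGraph.mem_interedges_iff, mem_coe, mem_compl] at hxy hxy'
  grind

lemma card_interedges_self_add_card_cutEdges (A : Finset V) :
    #(G.interedges A A) + #(cutEdges G A) = ∑ x ∈ A, G.degree x := by
  rw [card_cutEdges_eq_card_interedges_compl, card_interedges_eq_sum, card_interedges_eq_sum,
    ← sum_add_distrib]
  refine sum_congr rfl fun x _ => ?_
  rw [← G.card_neighborFinset_eq_degree, G.neighborFinset_eq_filter,
    ← card_union_of_disjoint (disjoint_filter_filter disjoint_compl_right), ← filter_union,
    union_compl]

lemma even_card_cutEdges {A : Finset V} (hdeg : ∀ x ∈ A, Even (G.degree x)) :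
    Even #(cutEdges G A) := by
  have hsum : Even (∑ x ∈ A, G.degree x) := even_sum _ hdeg
  rw [← card_interedges_self_add_card_cutEdges] at hsum
  exact (Nat.even_add.1 hsum).1 (even_card_interedges_self G A)

lemma card_cutEdges_insert_add {A : Finset V} {t : V} (ht : t ∉ A) :
    #(cutEdges G (insert t A)) + 2 * #{x ∈ A | G.Adj t x} = #(cutEdges G A) + G.degree t := by
  have hinsert := card_interedges_self_add_card_cutEdges G (insert t A)
  rw [card_interedges_insert_self G ht, sum_insert ht] at hinsert
  have hA := card_interedges_self_add_card_cutEdges G A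
  omega

variable {G} {W : Type*} [Fintype W] {K : SimpleGraph W}

lemma card_cutEdges_map (f : W ↪ V) {B : Finset W}
    (hdeg : ∀ x ∈ B, K.degree x = G.degree (f x))
    (hadj : ∀ x ∈ B, ∀ y ∈ B, K.Adj x y ↔ G.Adj (f x) (f y)) :
    #(cutEdges G (B.map f)) = #(cutEdges K B) := by
  have hinter : #(G.interedges (B.map f) (B.map f)) = #(K.interedges B B) := by
    simp only [card_interedges_eq_sum, sum_map, filter_map, card_map]
    refine sum_congr rfl fun x hx => congrArg card (filter_congr fun y hy => ?_)
    exact (hadj x hx y hy).symm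
  have hV := card_interedges_self_add_card_cutEdges G (B.map f)
  have hW := card_interedges_self_add_card_cutEdges K B
  rw [sum_map, ← sum_congr rfl hdeg] at hV
  omega

lemma connected_of_cutEdges_nonempty [Nonempty V] (hdeg : ∀ v, 0 < G.degree v)
    (hcut : ∀ A : Finset V, 2 ≤ #A → 2 ≤ #Aᶜ → (cutEdges G A).Nonempty) : G.Connected := by
  refine ⟨fun x y => by_contra fun hxy => ?_⟩
  let A : Finset V := {z | G.Reachable x z}
  have hA : ∀ {u v}, G.Adj u v → (u ∈ A ↔ v ∈ A) := fun {u v} huv => by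
    simpa [A] using ⟨fun h => h.trans huv.reachable, fun h => h.trans huv.symm.reachable⟩
  have hxA : x ∈ A := by simp [A]
  have hyA : y ∉ A := by simpa [A] using hxy
  obtain ⟨x', hxx'⟩ := (G.degree_pos_iff_exists_adj x).1 (hdeg x)
  obtain ⟨y', hyy'⟩ := (G.degree_pos_iff_exists_adj y).1 (hdeg y)
  have hcard : 2 ≤ #A := one_lt_card.2 ⟨x, hxA, x', (hA hxx').1 hxA, hxx'.ne⟩
  have hcard' : 2 ≤ #Aᶜ := one_lt_card.2
    ⟨y, mem_compl.2 hyA, y', mem_compl.2 ((hA hyy').not.1 hyA), hyy'.ne⟩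
  have hpos := (hcut A hcard hcard').card_pos
  rw [card_cutEdges_eq_card_interedges_compl] at hpos
  obtain ⟨p, hp⟩ := card_pos.1 hpos
  rw [SimpleGraph.mem_interedges_iff, mem_compl] at hp
  exact hp.2.1 ((hA hp.2.2).1 hp.1)

lemma CompletedPrimitive.of_four_lt_card_cutEdges (hdeg : ∀ v, G.degree v = 4)
    (hcard : 3 ≤ Fintype.card V)
    (hcut : ∀ A : Finset V, 2 ≤ #A → 2 ≤ #Aᶜ → 4 < #(cutEdges G A)) :
    CompletedPrimitive G := by
  have : Nonempty V := Fintype.card_pos_iff.1 (by omega)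
  have hconn : G.Connected := connected_of_cutEdges_nonempty (fun v => by simp [hdeg v])
    fun A hA hA' => card_pos.1 (by have := hcut A hA hA'; omega)
  exact ⟨hdeg, hconn, hcard, hcut⟩

lemma CompletedPrimitive.six_le_card_cutEdges (h : CompletedPrimitive G) {A : Finset V}
    (hA : 2 ≤ #A) (hA' : 2 ≤ #Aᶜ) : 6 ≤ #(cutEdges G A) := by
  have hlt := h.2.2.2 A hA hA'
  obtain ⟨k, hk⟩ := even_card_cutEdges G (A := A) fun x _ => h.1 x ▸ by decide
  omega

lemma CompletedPrimitive.four_lt_card_cutEdges_of_card_inter_le_one (h : CompletedPrimitive G)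
    (f : W ↪ V) {T : Finset V} (hdeg : ∀ v, K.degree v = 4)
    (hadj : ∀ x y, ¬ (f x ∈ T ∧ f y ∈ T) → (K.Adj x y ↔ G.Adj (f x) (f y)))
    {B : Finset W} (hB : 2 ≤ #B) (hB' : 2 ≤ #Bᶜ) (hBT : #(B.map f ∩ T) ≤ 1) :
    4 < #(cutEdges K B) := by
  have hadjB : ∀ x ∈ B, ∀ y ∈ B, K.Adj x y ↔ G.Adj (f x) (f y) := fun x hx y hy => by
    by_cases hxy : f x ∈ T ∧ f y ∈ T
    · obtain rfl : x = y := f.injective <| card_le_one.1 hBT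
        _ (mem_inter.2 ⟨mem_map_of_mem f hx, hxy.1⟩) _ (mem_inter.2 ⟨mem_map_of_mem f hy, hxy.2⟩)
      simp only [SimpleGraph.irrefl]
    · exact hadj x y hxy
  rw [← card_cutEdges_map f (fun x _ => (hdeg x).trans (h.1 _).symm) hadjB]
  have hcompl : Bᶜ.map f ⊆ (B.map f)ᶜ :=
    subset_compl_iff_disjoint_left.2 ((disjoint_map f).2 disjoint_compl_right)
  exact h.2.2.2 _ (by rwa [card_map]) (hB'.trans (card_map f ▸ card_le_card hcompl))

lemma CompletedPrimitive.of_adj_iff_off_triple (h : CompletedPrimitive G) (f : W ↪ V) {T : Finset V}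
    (hT : #T ≤ 3) (hdeg : ∀ v, K.degree v = 4) (hcard : 3 ≤ Fintype.card W)
    (hadj : ∀ x y, ¬ (f x ∈ T ∧ f y ∈ T) → (K.Adj x y ↔ G.Adj (f x) (f y))) :
    CompletedPrimitive K := by
  refine .of_four_lt_card_cutEdges hdeg hcard fun B hB hB' => ?_
  rcases card_map_inter_le_or_card_map_compl_inter_le f (k := 1) hT B with hBT | hBT
  · exact h.four_lt_card_cutEdges_of_card_inter_le_one f hdeg hadj hB hB' hBT
  · rw [← cutEdges_compl]
    exact h.four_lt_card_cutEdges_of_card_inter_le_one f hdeg hadj hB' (by rwa [compl_compl]) hBT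

end Cuts

/-- The vertex set of `G` is the disjoint union of `V₁`, `V₂` and the separator `T`, and no edge
joins `V₁` to `V₂`. The sides `V₁` and `V₂` are allowed to be empty. -/
structure IsVertexSeparation {V : Type*} (G : SimpleGraph V) (V₁ V₂ T : Finset V) : Prop where
  disjoint : Disjoint V₁ V₂
  disjoint_left : Disjoint V₁ T
  disjoint_right : Disjoint V₂ T
  cover : ∀ x, x ∈ V₁ ∨ x ∈ V₂ ∨ x ∈ T
  not_adj : ∀ x ∈ V₁, ∀ y ∈ V₂, ¬ G.Adj x y

namespace IsVertexSeparation

variable {V : Type*} {G : SimpleGraph V} {V₁ V₂ T : Finset V}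

lemma symm (sep : IsVertexSeparation G V₁ V₂ T) : IsVertexSeparation G V₂ V₁ T where
  disjoint := sep.disjoint.symm
  disjoint_left := sep.disjoint_right
  disjoint_right := sep.disjoint_left
  cover x := or_left_comm.1 (sep.cover x)
  not_adj x hx y hy hxy := sep.not_adj y hy x hx hxy.symm

lemma mem_union_of_adj (sep : IsVertexSeparation G V₁ V₂ T) {x y : V} (hx : x ∈ V₁)
    (hxy : G.Adj x y) : y ∈ V₁ ∪ T := by
  have hy : y ∉ V₂ := fun hy => sep.not_adj x hx y hy hxy
  have := sep.cover y
  rw [mem_union]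
  tauto

variable [Fintype V]

lemma degree_eq (sep : IsVertexSeparation G V₁ V₂ T) (x : V) :
    G.degree x = #{y ∈ V₁ | G.Adj x y} + #{y ∈ V₂ | G.Adj x y} + #{y ∈ T | G.Adj x y} := by
  have huniv : (univ : Finset V) = V₁ ∪ V₂ ∪ T := by
    ext y
    simpa [or_assoc] using sep.cover y
  have hdisj : Disjoint (V₁ ∪ V₂) T := disjoint_union_left.2 ⟨sep.disjoint_left, sep.disjoint_right⟩
  rw [← G.card_neighborFinset_eq_degree, G.neighborFinset_eq_filter, huniv, filter_union,
    filter_union, card_union_of_disjoint, card_union_of_disjoint]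
  · exact disjoint_filter_filter sep.disjoint
  · rw [← filter_union]
    exact disjoint_filter_filter hdisj

lemma sum_degree_eq (sep : IsVertexSeparation G V₁ V₂ T) (A : Finset V) :
    ∑ x ∈ A, G.degree x =
      #(G.interedges A V₁) + #(G.interedges A V₂) + #(G.interedges A T) := by
  simp only [sep.degree_eq, sum_add_distrib, card_interedges_eq_sum]

lemma card_cutEdges_eq (sep : IsVertexSeparation G V₁ V₂ T) :
    #(cutEdges G V₁) = #(G.interedges T V₁) := by
  have hnone : #(G.interedges V₁ V₂) = 0 := by
    rw [card_interedges_eq_sum]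
    refine sum_eq_zero fun x hx => ?_
    rw [card_filter_eq_zero_iff]
    exact sep.not_adj x hx
  have hsum := card_interedges_self_add_card_cutEdges G V₁
  rw [sep.sum_degree_eq, hnone] at hsum
  have hcomm : #(G.interedges V₁ T) = #(G.interedges T V₁) :=
    have := G.symm
    Rel.card_interedges_comm V₁ T
  omega

lemma sum_degree_separator (sep : IsVertexSeparation G V₁ V₂ T) :
    ∑ t ∈ T, G.degree t = #(cutEdges G V₁) + #(cutEdges G V₂) + #(G.interedges T T) := by
  rw [sep.sum_degree_eq, sep.card_cutEdges_eq, sep.symm.card_cutEdges_eq]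

lemma degree_lt_card_add_card (sep : IsVertexSeparation G V₁ V₂ T) {x : V} (hx : x ∈ V₁) :
    G.degree x < #V₁ + #T := by
  rw [← G.card_neighborFinset_eq_degree, ← card_union_of_disjoint sep.disjoint_left]
  refine card_lt_card (ssubset_iff_of_subset ?_ |>.2 ⟨x, mem_union_left _ hx, by simp⟩)
  exact fun y hy => sep.mem_union_of_adj hx (by simpa using hy)

lemma two_le_card (sep : IsVertexSeparation G V₁ V₂ T) (hdeg : ∀ x ∈ V₁, #T < G.degree x)
    (hne : V₁.Nonempty) : 2 ≤ #V₁ := by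
  obtain ⟨x, hx⟩ := hne
  have := sep.degree_lt_card_add_card hx
  have := hdeg x hx
  omega

lemma subset_compl_insert (sep : IsVertexSeparation G V₁ V₂ T) {t : V} (ht : t ∈ T) :
    V₂ ⊆ (insert t V₁)ᶜ := by
  rw [subset_compl_iff_disjoint_left, disjoint_insert_left]
  exact ⟨Finset.disjoint_right.1 sep.disjoint_right ht, sep.disjoint⟩

end IsVertexSeparation

section SeparatorOfSizeThree

variable {V : Type*} [Fintype V] {G : SimpleGraph V} {V₁ V₂ T : Finset V}

lemma CompletedPrimitive.two_le_card_side (h : CompletedPrimitive G)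
    (sep : IsVertexSeparation G V₁ V₂ T) (hT : #T = 3) (hne : V₁.Nonempty) : 2 ≤ #V₁ :=
  sep.two_le_card (fun x _ => by rw [h.1, hT]; norm_num) hne

lemma CompletedPrimitive.six_le_card_cutEdges_side (h : CompletedPrimitive G)
    (sep : IsVertexSeparation G V₁ V₂ T) (hT : #T = 3) (h₁ : V₁.Nonempty) (h₂ : V₂.Nonempty) :
    6 ≤ #(cutEdges G V₁) :=
  h.six_le_card_cutEdges (h.two_le_card_side sep hT h₁) <|
    (h.two_le_card_side sep.symm hT h₂).trans <|
      card_le_card (subset_compl_iff_disjoint_left.2 sep.disjoint)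

lemma CompletedPrimitive.card_cutEdges_sides_add_card_interedges (h : CompletedPrimitive G)
    (sep : IsVertexSeparation G V₁ V₂ T) (hT : #T = 3) :
    #(cutEdges G V₁) + #(cutEdges G V₂) + #(G.interedges T T) = 12 := by
  rw [← sep.sum_degree_separator, sum_congr rfl fun t _ => h.1 t, sum_const, hT, smul_eq_mul]

lemma CompletedPrimitive.card_cutEdges_side (h : CompletedPrimitive G)
    (sep : IsVertexSeparation G V₁ V₂ T) (hT : #T = 3) (h₁ : V₁.Nonempty) (h₂ : V₂.Nonempty) :
    #(cutEdges G V₁) = 6 := by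
  have hcut₁ := h.six_le_card_cutEdges_side sep hT h₁ h₂
  have hcut₂ := h.six_le_card_cutEdges_side sep.symm hT h₂ h₁
  have hsum := h.card_cutEdges_sides_add_card_interedges sep hT
  omega

lemma CompletedPrimitive.isIndepSet_separator (h : CompletedPrimitive G)
    (sep : IsVertexSeparation G V₁ V₂ T) (hT : #T = 3) (h₁ : V₁.Nonempty) (h₂ : V₂.Nonempty) :
    G.IsIndepSet T := by
  intro x hx y hy _ hxy
  have hsum := h.card_cutEdges_sides_add_card_interedges sep hT
  rw [h.card_cutEdges_side sep hT h₁ h₂, h.card_cutEdges_side sep.symm hT h₂ h₁] at hsum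
  have hpos : 0 < #(G.interedges T T) :=
    card_pos.2 ⟨(x, y), G.mk_mem_interedges_iff.2 ⟨hx, hy, hxy⟩⟩
  omega

lemma CompletedPrimitive.card_neighbors_side_le_two (h : CompletedPrimitive G)
    (sep : IsVertexSeparation G V₁ V₂ T) (hT : #T = 3) (h₁ : V₁.Nonempty) (h₂ : V₂.Nonempty)
    {t : V} (ht : t ∈ T) : #{x ∈ V₁ | G.Adj t x} ≤ 2 := by
  have hcard : 2 ≤ #(insert t V₁) :=
    (h.two_le_card_side sep hT h₁).trans (card_le_card (subset_insert _ _))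
  have hcard' : 2 ≤ #(insert t V₁)ᶜ :=
    (h.two_le_card_side sep.symm hT h₂).trans (card_le_card (sep.subset_compl_insert ht))
  have hcut := h.six_le_card_cutEdges hcard hcard'
  have hinsert := card_cutEdges_insert_add G (Finset.disjoint_right.1 sep.disjoint_left ht)
  rw [h.card_cutEdges_side sep hT h₁ h₂, h.1] at hinsert
  omega

lemma CompletedPrimitive.card_neighbors_side (h : CompletedPrimitive G)
    (sep : IsVertexSeparation G V₁ V₂ T) (hT : #T = 3) (h₁ : V₁.Nonempty) (h₂ : V₂.Nonempty)
    {t : V} (ht : t ∈ T) : #{x ∈ V₁ | G.Adj t x} = 2 := by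
  have hle₁ := h.card_neighbors_side_le_two sep hT h₁ h₂ ht
  have hle₂ := h.card_neighbors_side_le_two sep.symm hT h₂ h₁ ht
  have hindep : #{x ∈ T | G.Adj t x} = 0 := by
    rw [card_filter_eq_zero_iff]
    exact fun x hx htx => h.isIndepSet_separator sep hT h₁ h₂ ht hx htx.ne htx
  have hdeg := sep.degree_eq t
  rw [h.1] at hdeg
  omega

end SeparatorOfSizeThree

/-- The graph whose edges are the edges of `G` with at least one endpoint in `W` together with all
pairs of distinct vertices of `T`. It generalizes `splitGlue` from `{a, b, c}` to an arbitrary set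
of vertices. -/
def cliqueGlue {V : Type*} (G : SimpleGraph V) (W T : Finset V) : SimpleGraph V where
  Adj x y := x ≠ y ∧ (G.Adj x y ∧ (x ∈ W ∨ y ∈ W) ∨ x ∈ T ∧ y ∈ T)
  symm := ⟨fun x y => by simp only [G.adj_comm x y]; tauto⟩
  loopless := ⟨fun _ h => h.1 rfl⟩

section CliqueGlue

variable {V : Type*} {G : SimpleGraph V} {V₁ V₂ W T : Finset V} {t x y : V}

lemma cliqueGlue_adj : (cliqueGlue G W T).Adj x y ↔
    x ≠ y ∧ (G.Adj x y ∧ (x ∈ W ∨ y ∈ W) ∨ x ∈ T ∧ y ∈ T) := Iff.rfl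

lemma splitGlue_eq_cliqueGlue (G : SimpleGraph V) (W : Finset V) (a b c : V) :
    splitGlue G W a b c = cliqueGlue G W {a, b, c} := by
  ext x y
  simp only [splitGlue, cliqueGlue_adj, SimpleGraph.fromRel_adj, G.adj_comm y x, mem_insert,
    mem_singleton]
  tauto

lemma cliqueGlue_adj_of_mem_left (hx : x ∈ W) (hxT : x ∉ T) :
    (cliqueGlue G W T).Adj x y ↔ G.Adj x y := by
  have := G.ne_of_adj (a := x) (b := y)
  rw [cliqueGlue_adj]
  tauto

lemma cliqueGlue_adj_of_not_mem_and_mem (hx : x ∈ W ∪ T) (hy : y ∈ W ∪ T)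
    (hxy : ¬ (x ∈ T ∧ y ∈ T)) : (cliqueGlue G W T).Adj x y ↔ G.Adj x y := by
  have := G.ne_of_adj (a := x) (b := y)
  rw [mem_union] at hx hy
  rw [cliqueGlue_adj]
  tauto

lemma IsVertexSeparation.support_cliqueGlue_subset (sep : IsVertexSeparation G V₁ V₂ T) :
    (cliqueGlue G V₁ T).support ⊆ ↑(V₁ ∪ T) := by
  rintro x ⟨y, hxy⟩
  obtain ⟨-, ⟨hG, hx | hy⟩ | ⟨hx, -⟩⟩ := cliqueGlue_adj.1 hxy
  · exact mem_union_left _ hx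
  · exact sep.mem_union_of_adj hy hG.symm
  · exact mem_union_right _ hx

variable [Fintype V]

lemma degree_cliqueGlue_of_mem_left (hx : x ∈ W) (hxT : x ∉ T) :
    (cliqueGlue G W T).degree x = G.degree x := by
  simp only [← SimpleGraph.card_neighborFinset_eq_degree, SimpleGraph.neighborFinset_eq_filter,
    cliqueGlue_adj_of_mem_left hx hxT]

lemma degree_cliqueGlue_of_mem_right (hWT : Disjoint W T) (ht : t ∈ T) :
    (cliqueGlue G W T).degree t = #{x ∈ W | G.Adj t x} + (#T - 1) := by
  have hnbr : (cliqueGlue G W T).neighborFinset t = {x ∈ W | G.Adj t x} ∪ T.erase t := by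
    ext x
    have htW := Finset.disjoint_right.1 hWT ht
    have := G.ne_of_adj (a := t) (b := x)
    simp only [SimpleGraph.mem_neighborFinset, cliqueGlue_adj, mem_union, mem_filter, mem_erase]
    tauto
  rw [← SimpleGraph.card_neighborFinset_eq_degree, hnbr, card_union_of_disjoint,
    card_erase_of_mem ht]
  exact hWT.mono (filter_subset _ _) (erase_subset _ _)

lemma CompletedPrimitive.degree_induce_cliqueGlue (h : CompletedPrimitive G)
    (sep : IsVertexSeparation G V₁ V₂ T) (hT : #T = 3) (h₁ : V₁.Nonempty) (h₂ : V₂.Nonempty)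
    (v : (↑(V₁ ∪ T) : Set V))
    [Fintype (((cliqueGlue G V₁ T).induce (↑(V₁ ∪ T) : Set V)).neighborSet v)] :
    ((cliqueGlue G V₁ T).induce (↑(V₁ ∪ T) : Set V)).degree v = 4 := by
  have hinduce : ((cliqueGlue G V₁ T).induce (↑(V₁ ∪ T) : Set V)).degree v =
      (cliqueGlue G V₁ T).degree v := by
    convert SimpleGraph.degree_induce_of_support_subset sep.support_cliqueGlue_subset v
  rw [hinduce]
  rcases mem_union.1 v.2 with hv | hv
  · rw [degree_cliqueGlue_of_mem_left hv (Finset.disjoint_left.1 sep.disjoint_left hv), h.1]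
  · rw [degree_cliqueGlue_of_mem_right sep.disjoint_left hv, h.card_neighbors_side sep hT h₁ h₂ hv,
      hT]

lemma CompletedPrimitive.induce_cliqueGlue (h : CompletedPrimitive G)
    (sep : IsVertexSeparation G V₁ V₂ T) (hT : #T = 3) (h₁ : V₁.Nonempty) (h₂ : V₂.Nonempty) :
    CompletedPrimitive ((cliqueGlue G V₁ T).induce (↑(V₁ ∪ T) : Set V)) := by
  have hcard : 3 ≤ Fintype.card (↑(V₁ ∪ T) : Set V) := by
    have hle : #T ≤ #(V₁ ∪ T) := card_le_card subset_union_right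
    simpa only [Finset.coe_sort_coe, Fintype.card_coe, hT] using hle
  exact h.of_adj_iff_off_triple (Function.Embedding.subtype _) hT.le
    (fun v => h.degree_induce_cliqueGlue sep hT h₁ h₂ v) hcard
    fun x y hxy => cliqueGlue_adj_of_not_mem_and_mem x.2 y.2 hxy

end CliqueGlue

/-- If a completed primitive graph `Γ` has its vertex set partitioned as
`V = V₁ ⊔ V₂ ⊔ {a,b,c}` with `V₁, V₂` nonempty and no edge joining `V₁` to `V₂`, then each
of `a`, `b`, `c` has exactly two neighbours in `V₁` and two in `V₂`, there are no edges
among `a`, `b`, `c`, and each side, completed by the triangle `abc`, is a completed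
primitive 4-regular graph. -/
theorem vertex_connectivity_three_split {V : Type*} [Fintype V] (G : SimpleGraph V)
    (h : CompletedPrimitive G)
    (V₁ V₂ : Finset V) (a b c : V)
    (hab : a ≠ b) (hac : a ≠ c) (hbc : b ≠ c)
    (hdisj : Disjoint V₁ V₂)
    (ha1 : a ∉ V₁) (hb1 : b ∉ V₁) (hc1 : c ∉ V₁)
    (ha2 : a ∉ V₂) (hb2 : b ∉ V₂) (hc2 : c ∉ V₂)
    (hcover : ∀ x : V, x ∈ V₁ ∨ x ∈ V₂ ∨ x = a ∨ x = b ∨ x = c)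
    (h1ne : V₁.Nonempty) (h2ne : V₂.Nonempty)
    (hsep : ∀ x ∈ V₁, ∀ y ∈ V₂, ¬ G.Adj x y) :
    (∀ t : V, (t = a ∨ t = b ∨ t = c) →
        (V₁.filter (fun x => G.Adj t x)).card = 2 ∧
        (V₂.filter (fun x => G.Adj t x)).card = 2) ∧
    (¬ G.Adj a b ∧ ¬ G.Adj b c ∧ ¬ G.Adj a c) ∧
    CompletedPrimitive ((splitGlue G V₁ a b c).induce (↑(V₁ ∪ {a, b, c}) : Set V)) ∧
    CompletedPrimitive ((splitGlue G V₂ a b c).induce (↑(V₂ ∪ {a, b, c}) : Set V)) := by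
  have sep : IsVertexSeparation G V₁ V₂ {a, b, c} :=
    ⟨hdisj, by simp [*], by simp [*], by simpa using hcover, hsep⟩
  have hT : #({a, b, c} : Finset V) = 3 := card_eq_three.2 ⟨a, b, c, hab, hac, hbc, rfl⟩
  have hindep := h.isIndepSet_separator sep hT h1ne h2ne
  refine ⟨fun t ht => ?_, ⟨?_, ?_, ?_⟩, ?_, ?_⟩
  · have htT : t ∈ ({a, b, c} : Finset V) := by simpa using ht
    exact ⟨h.card_neighbors_side sep hT h1ne h2ne htT,
      h.card_neighbors_side sep.symm hT h2ne h1ne htT⟩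
  · exact hindep (by simp) (by simp) hab
  · exact hindep (by simp) (by simp) hbc
  · exact hindep (by simp) (by simp) hac
  · rw [splitGlue_eq_cliqueGlue]
    exact h.induce_cliqueGlue sep hT h1ne h2ne
  · rw [splitGlue_eq_cliqueGlue]
    exact h.induce_cliqueGlue sep.symm hT h2ne h1ne
end

section
/- Let Γ₁ and Γ₂ be completed primitive simple graphs on disjoint vertex sets with triangles (a₁,b₁,c₁) and (a₂,b₂,c₂) respectively, and let Γ be the completed primitive graph obtained by identifying a₁ with a₂, b₁ with b₂, c₁ with c₂ and deleting the three triangle edges ab, bc, ca. Then the periods multiply: P_Γ = P_{Γ₁} · P_{Γ₂}. -/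
open scoped Classical

/-- `x` is one of the three triangle vertices `a`, `b`, `c`. -/
def InTriangle {W : Type*} (a b c x : W) : Prop := x = a ∨ x = b ∨ x = c

/-- The vertex set of the gluing of two graphs along triangles `(a₁,b₁,c₁)` and
`(a₂,b₂,c₂)`: all vertices of `W₁`, and the vertices of `W₂` other than the triangle
vertices (which get identified with `a₁`, `b₁`, `c₁`). -/
def GluedVert (W₁ W₂ : Type*) (a₂ b₂ c₂ : W₂) : Type _ :=
  W₁ ⊕ {z : W₂ // ¬ InTriangle a₂ b₂ c₂ z}

noncomputable instance {W₁ W₂ : Type*} [Fintype W₁] [Fintype W₂] (a₂ b₂ c₂ : W₂) :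
    Fintype (GluedVert W₁ W₂ a₂ b₂ c₂) := by
  unfold GluedVert; infer_instance

/-- The gluing of `G₁` and `G₂` along the triangles `(a₁,b₁,c₁)` and `(a₂,b₂,c₂)`
(identifying `a₁ ~ a₂`, `b₁ ~ b₂`, `c₁ ~ c₂`), with the three triangle edges deleted. -/
def glueOnTriangles {W₁ W₂ : Type*} (G₁ : SimpleGraph W₁) (G₂ : SimpleGraph W₂)
    (a₁ b₁ c₁ : W₁) (a₂ b₂ c₂ : W₂) : SimpleGraph (GluedVert W₁ W₂ a₂ b₂ c₂) :=
  SimpleGraph.fromRel (fun u v =>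
    match u, v with
    | Sum.inl x, Sum.inl y =>
        G₁.Adj x y ∧ ¬ (InTriangle a₁ b₁ c₁ x ∧ InTriangle a₁ b₁ c₁ y)
    | Sum.inl x, Sum.inr y =>
        (x = a₁ ∧ G₂.Adj a₂ y.1) ∨ (x = b₁ ∧ G₂.Adj b₂ y.1) ∨ (x = c₁ ∧ G₂.Adj c₂ y.1)
    | Sum.inr _, Sum.inl _ => False
    | Sum.inr y, Sum.inr z => G₂.Adj y.1 z.1)

open scoped Classical
open MeasureTheory

/-- 4-dimensional Euclidean space. -/
abbrev R4 := EuclideanSpace ℝ (Fin 4)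

/-- Extension of an assignment `x` of position vectors to the vertices outside `{u,w,z}`
by `x_w = 0` and `x_z = e` (the value at `u` is irrelevant). -/
noncomputable def extendPos {V : Type*} (u w z : V) (e : R4)
    (x : {v : V // v ≠ u ∧ v ≠ w ∧ v ≠ z} → R4) (v : V) : R4 :=
  if v = w then 0
  else if v = z then e
  else if h : v ≠ u ∧ v ≠ w ∧ v ≠ z then x ⟨v, h⟩ else 0

/-- The position-space integrand of the period: the product over all edges of `Γ` not
meeting `u` of `‖x_i − x_j‖⁻²`. -/
noncomputable def periodIntegrand {V : Type*} [Fintype V] (G : SimpleGraph V)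
    (u w z : V) (e : R4) (x : {v : V // v ≠ u ∧ v ≠ w ∧ v ≠ z} → R4) : ℝ :=
  ∏ ed ∈ G.edgeFinset.filter (fun ed => u ∉ ed),
    Sym2.lift ⟨fun i j => (‖extendPos u w z e x i - extendPos u w z e x j‖ ^ 2)⁻¹,
      fun i j => by simp [norm_sub_rev]⟩ ed

/-- The affine position-space integral `I(u,w,z,e)` of a graph. -/
noncomputable def positionIntegral {V : Type*} [Fintype V] (G : SimpleGraph V)
    (u w z : V) (e : R4) : ℝ :=
  ∫ x : {v : V // v ≠ u ∧ v ≠ w ∧ v ≠ z} → R4, periodIntegrand G u w z e x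

/-- The period of a completed primitive graph on `ℓ + 2` vertices, computed in affine
position space: `P_Γ = π^{−2(ℓ−1)} I(u,w,z,e)`. -/
noncomputable def period {V : Type*} [Fintype V] (G : SimpleGraph V)
    (u w z : V) (e : R4) : ℝ :=
  (Real.pi ^ (2 * (Fintype.card V - 3)))⁻¹ * positionIntegral G u w z e

/-!
In the unnormalised period the marked vertices `u`, `w`, `z` sit at infinity, at the origin and at a
unit vector, and the group of conformal maps makes their choice irrelevant. Translations and
isometries exchange `w` and `z`. The inversion `x ↦ x / ‖x‖²` exchanges `u` and `w`: every vertex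
contributes a power of its norm that depends on its degree, and for a 4-regular graph in dimension
4 these powers cancel the Jacobian. To move the unit vector from `z` to `z'`, let `y` be the
position of `z'`, substitute the inversion of `y`, and apply the similarity that takes the pair
formed by the unit vector and the inverted `y` to the pair formed by `y` and the unit vector.

For the glued graph, mark the three vertices of the triangle. The edges of the triangle then
contribute `1`, so that deleting them does no harm, and the remaining vertices of the two graphs are
not connected to each other, so that the integral is a product by Tonelli's theorem. All integrals
are taken in `[0, ∞]`, so that convergence plays no role.
-/

open scoped NNReal ENNReal
open EuclideanGeometry (inversion)

/-! ### Marginal integrals -/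

section Marginal

variable {ι : Type*} {X : ι → Type*} [∀ i, MeasurableSpace (X i)] {μ : ∀ i, Measure (X i)}
  {s : Finset ι} {f g : (∀ i, X i) → ℝ≥0∞} {x : ∀ i, X i}

theorem lmarginal_congr_of_ne [∀ i, SigmaFinite (μ i)] [∀ i, NullSingletonClass (μ i)]
    (a : ∀ i, X i) (h : ∀ y, (∀ i ∉ s, y i = x i) → (∀ i ∈ s, y i ≠ a i) → f y = g y) :
    (∫⋯∫⁻_s, f ∂μ) x = (∫⋯∫⁻_s, g ∂μ) x := by
  refine lintegral_congr_ae ?_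
  have hne : ∀ᵐ y ∂Measure.pi fun i : s => μ i, ∀ i : s, y i ≠ a i :=
    ae_all_iff.2 fun i => Measure.ae_eval_ne (μ := fun i : s => μ i) i (a i)
  filter_upwards [hne] with y hy
  refine h _ (fun i hi => ?_) fun i hi => ?_
  · simp [Function.updateFinset, hi]
  · simpa [Function.updateFinset, hi] using hy ⟨i, hi⟩

theorem lmarginal_mul_left (hg : Measurable g)
    (hf : ∀ y, (∀ i ∉ s, y i = x i) → f y = f x) :
    (∫⋯∫⁻_s, fun y => f y * g y ∂μ) x = f x * (∫⋯∫⁻_s, g ∂μ) x := by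
  have hfx : ∀ y : ∀ i : s, X i, f (Function.updateFinset x s y) = f x := fun y =>
    hf _ fun i hi => by simp [Function.updateFinset, hi]
  simp only [lmarginal, hfx]
  exact lintegral_const_mul _ (hg.comp measurable_updateFinset)

section ChangeOfVariables

variable {Y : ι → Type*} [∀ i, MeasurableSpace (Y i)] {ν : ∀ i, Measure (Y i)}
  {f : (∀ i, Y i) → ℝ≥0∞} {T : ∀ i, X i → Y i} {ρ : ∀ i, X i → ℝ≥0∞}

theorem lintegral_comp_update_mul_prod_insert (hρ : ∀ i, Measurable (ρ i))
    (hT : ∀ i, MeasurePreserving (T i) ((μ i).withDensity (ρ i)) (ν i)) (hf : Measurable f)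
    {j : ι} (hj : j ∉ s) (y : ∀ i, X i) :
    ∫⁻ a, f (fun i => T i (Function.update y j a i))
        * ∏ i ∈ insert j s, ρ i (Function.update y j a i) ∂μ j
      = (∫⁻ b, f (Function.update (fun i => T i (y i)) j b) ∂ν j) * ∏ i ∈ s, ρ i (y i) := by
  have hprod (a : X j) :
      ∏ i ∈ insert j s, ρ i (Function.update y j a i) = ρ j a * ∏ i ∈ s, ρ i (y i) := by
    rw [Finset.prod_insert hj, Function.update_self]
    exact congrArg _ <| Finset.prod_congr rfl fun i hi => by
      rw [Function.update_of_ne (ne_of_mem_of_not_mem hi hj)]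
  let F := fun b => f (Function.update (fun i => T i (y i)) j b)
  have hF : Measurable F := hf.comp (measurable_update _)
  have hFT : Measurable (F ∘ T j) := hF.comp (hT j).measurable
  calc _ = ∫⁻ a, ρ j a * F (T j a) * ∏ i ∈ s, ρ i (y i) ∂μ j := by
        simp_rw [hprod, Function.apply_update T, ← mul_assoc, mul_comm (ρ j _)]; rfl
    _ = (∫⁻ a, F (T j a) ∂(μ j).withDensity (ρ j)) * ∏ i ∈ s, ρ i (y i) :=
        (lintegral_mul_const _ ((hρ j).mul hFT)).trans <|
          congrArg (· * _) (lintegral_withDensity_eq_lintegral_mul _ (hρ j) hFT).symm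
    _ = _ := by rw [(hT j).lintegral_comp hF]

theorem lmarginal_comp_mul_prod [∀ i, SigmaFinite (μ i)] [∀ i, SigmaFinite (ν i)]
    (hρ : ∀ i, Measurable (ρ i))
    (hT : ∀ i, MeasurePreserving (T i) ((μ i).withDensity (ρ i)) (ν i)) (hf : Measurable f) :
    (∫⋯∫⁻_s, fun y => f (fun i => T i (y i)) * ∏ i ∈ s, ρ i (y i) ∂μ) x
      = (∫⋯∫⁻_s, f ∂ν) fun i => T i (x i) := by
  have hTm : Measurable fun (y : ∀ i, X i) i => T i (y i) :=
    measurable_pi_lambda _ fun i => (hT i).measurable.comp (measurable_pi_apply i)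
  have hρm (i : ι) : Measurable fun y : ∀ i, X i => ρ i (y i) := (hρ i).comp (measurable_pi_apply i)
  induction s using Finset.induction generalizing f x with
  | empty => simp
  | insert j s hj ih =>
    have hfT : Measurable fun y : ∀ i, X i => f fun i => T i (y i) := hf.comp hTm
    have hf' : Measurable fun y => ∫⁻ b, f (Function.update y j b) ∂ν j :=
      (hf.comp measurable_update').lintegral_prod_right'
    rw [lmarginal_insert' _ (hfT.fun_mul (Finset.measurable_fun_prod _ fun i _ => hρm i)) hj,
      lmarginal_insert' _ hf hj, ← ih hf']
    simp_rw [lintegral_comp_update_mul_prod_insert hρ hT hf hj]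

end ChangeOfVariables

theorem lmarginal_image_union_image {κ₁ κ₂ : Type*} {i : κ₁ → ι} {j : κ₂ → ι}
    [∀ i, SigmaFinite (μ i)] (hi : i.Injective) (hj : j.Injective)
    {s : Finset κ₁} {t : Finset κ₂} (hs : ∀ k ∈ s, i k ∉ Set.range j)
    (ht : ∀ k ∈ t, j k ∉ Set.range i) {f : (∀ k, X (i k)) → ℝ≥0∞} (hf : Measurable f)
    {g : (∀ k, X (j k)) → ℝ≥0∞} (hg : Measurable g) :
    (∫⋯∫⁻_s.image i ∪ t.image j, fun y => f (fun k => y (i k)) * g (fun k => y (j k)) ∂μ) x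
      = (∫⋯∫⁻_s, f ∂fun k => μ (i k)) (fun k => x (i k))
        * (∫⋯∫⁻_t, g ∂fun k => μ (j k)) (fun k => x (j k)) := by
  have hfi : Measurable fun y : ∀ i, X i => f (fun k => y (i k)) := hf.comp (by fun_prop)
  have hgj : Measurable fun y : ∀ i, X i => g (fun k => y (j k)) := hg.comp (by fun_prop)
  have hst : Disjoint (s.image i) (t.image j) := by
    simp only [Finset.disjoint_left, Finset.forall_mem_image]
    intro k hk hkt
    obtain ⟨l, -, hl⟩ := Finset.mem_image.1 hkt
    exact hs k hk ⟨l, hl⟩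
  rw [lmarginal_union _ _ (hfi.fun_mul hgj) hst]
  have hinner : (∫⋯∫⁻_t.image j, fun y => f (fun k => y (i k)) * g (fun k => y (j k)) ∂μ)
      = fun y => (∫⋯∫⁻_t, g ∂fun k => μ (j k)) (fun k => y (j k)) * f (fun k => y (i k)) := by
    funext y
    rw [lmarginal_mul_left hgj, mul_comm]
    · exact congrArg (· * _) (lmarginal_image hj t hg y)
    · exact fun y' hy' => congrArg f <| funext fun k => hy' _ fun hk => by
        obtain ⟨l, hl, hlk⟩ := Finset.mem_image.1 hk
        exact ht l hl ⟨k, hlk.symm⟩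
  rw [hinner, lmarginal_mul_left hfi, mul_comm]
  · exact congrArg (· * _) (lmarginal_image hi s hf x)
  · exact fun y hy => congrArg _ <| funext fun l => hy _ fun hl => by
      obtain ⟨k, hk, hkl⟩ := Finset.mem_image.1 hl
      exact hs k hk ⟨l, hkl.symm⟩

end Marginal

/-! ### Conformal changes of variables -/

section Conformal

variable {E : Type*} [NormedAddCommGroup E] [InnerProductSpace ℝ E] [FiniteDimensional ℝ E]

theorem abs_det_smul_reflection (K : Submodule ℝ E) (r : ℝ) :
    |(r • (K.reflection : E →L[ℝ] E)).det| = |r| ^ Module.finrank ℝ E := by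
  have hK : |LinearMap.det K.reflection.toLinearMap| = 1 := by simp [K.det_reflection, abs_pow]
  rw [ContinuousLinearMap.det, ContinuousLinearMap.toLinearMap_smul, LinearMap.det_smul, abs_mul,
    abs_pow]
  exact (congrArg _ hK).trans (mul_one _)

variable [MeasurableSpace E] [BorelSpace E]

theorem measurePreserving_similarity (A : E ≃ₗᵢ[ℝ] E) (b : E) {r : ℝ≥0} (hr : r ≠ 0) :
    MeasurePreserving (fun x => (r : ℝ) • A x + b)
      (volume.withDensity fun _ => (r : ℝ≥0∞) ^ Module.finrank ℝ E) volume := by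
  have hr' : (r : ℝ) ≠ 0 := NNReal.coe_ne_zero.2 hr
  have hsmul : MeasurePreserving (fun x : E => (r : ℝ) • x)
      ((r : ℝ≥0∞) ^ Module.finrank ℝ E • volume) volume := by
    refine ⟨measurable_const_smul _, ?_⟩
    have hofReal : ENNReal.ofReal |((r : ℝ) ^ Module.finrank ℝ E)⁻¹|
        = ((r : ℝ≥0∞) ^ Module.finrank ℝ E)⁻¹ := by
      rw [abs_of_nonneg (by positivity), ENNReal.ofReal_inv_of_pos (by positivity),
        ENNReal.ofReal_pow r.coe_nonneg, ENNReal.ofReal_coe_nnreal]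
    rw [Measure.map_smul, Measure.map_addHaar_smul _ hr', hofReal, smul_smul,
      ENNReal.mul_inv_cancel (by simpa using fun h => absurd h hr) (by finiteness), one_smul]
  rw [withDensity_const]
  exact ((measurePreserving_add_right volume b).comp hsmul).comp
    (A.measurePreserving.smul_measure _)

theorem measurePreserving_inversion [Nontrivial E] (c : E) {R : ℝ} (hR : R ≠ 0) :
    MeasurePreserving (inversion c R)
      (volume.withDensity fun x => ENNReal.ofReal ((R / dist x c) ^ (2 * Module.finrank ℝ E)))
      volume := by
  have hcompl : (volume : Measure E).restrict {c}ᶜ = volume :=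
    Measure.restrict_eq_self_of_ae_mem (by simp [ae_iff])
  have hmeas : Measurable (inversion c R) := by
    unfold EuclideanGeometry.inversion
    simp only [vsub_eq_sub, vadd_eq_add]
    fun_prop
  have himage : inversion c R '' {c}ᶜ = {c}ᶜ := by
    simp [Set.image_compl_eq (EuclideanGeometry.inversion_bijective c hR)]
  have hmap := map_withDensity_abs_det_fderiv_eq_addHaar volume
    (measurableSet_singleton c).compl.nullMeasurableSet
    (fun x hx => (EuclideanGeometry.hasFDerivAt_inversion (R := R) hx).hasFDerivWithinAt)
    (EuclideanGeometry.inversion_injective c hR).injOn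
  refine ⟨hmeas, ?_⟩
  rw [hcompl, himage, hcompl] at hmap
  simpa only [abs_det_smul_reflection, abs_sq, ← pow_mul] using hmap

theorem measurePreserving_inversion_zero_one [Nontrivial E] :
    MeasurePreserving (inversion (0 : E) 1)
      (volume.withDensity fun x => ((‖x‖₊ ^ (2 * Module.finrank ℝ E))⁻¹ : ℝ≥0)) volume := by
  have hρ (x : E) : ENNReal.ofReal ((1 / dist x 0) ^ (2 * Module.finrank ℝ E))
      = ((‖x‖₊ ^ (2 * Module.finrank ℝ E))⁻¹ : ℝ≥0) := by
    rw [dist_zero_right, one_div, inv_pow, ← ENNReal.ofReal_coe_nnreal]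
    simp
  simpa only [hρ] using measurePreserving_inversion (0 : E) one_ne_zero

end Conformal

/-! ### The Feynman integrand -/

section Handshake

variable {V M : Type*} [Fintype V] [CommMonoid M]

@[to_additive]
theorem prod_edgeFinset_mul_map (G : SimpleGraph V) (f : V → M) :
    ∏ ed ∈ G.edgeFinset, (ed.map f).mul = ∏ v, f v ^ G.degree v := by
  have hmul : ∀ ed ∈ G.edgeFinset, (ed.map f).mul = ∏ v, if v ∈ ed then f v else 1 := by
    intro ed hed
    induction ed using Sym2.ind with
    | _ i j =>
      have hij : i ≠ j := G.ne_of_adj (SimpleGraph.mem_edgeFinset.1 hed)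
      have hends : (Finset.univ.filter fun v => v ∈ s(i, j)) = {i, j} := by ext v; simp
      rw [Finset.prod_ite, hends, Finset.prod_pair hij, Finset.prod_const_one, mul_one,
        Sym2.map_mk, Sym2.mul_mk]
  rw [Finset.prod_congr rfl hmul, Finset.prod_comm]
  refine Finset.prod_congr rfl fun v _ => ?_
  rw [Finset.prod_ite, Finset.prod_const, Finset.prod_const_one, mul_one,
    ← SimpleGraph.card_incidenceFinset_eq_degree, SimpleGraph.incidenceFinset_eq_filter]

end Handshake

theorem mul_card_edges_avoiding_add {V : Type*} [Fintype V] {G : SimpleGraph V} {k p n : ℕ}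
    (hG : G.IsRegularOfDegree k) (hk : k * p = 2 * n) (u : V) :
    p * (G.edgeFinset.filter (u ∉ ·)).card + 2 * n = n * Fintype.card V := by
  have hat : (G.edgeFinset.filter (u ∈ ·)).card = k := by
    rw [← SimpleGraph.incidenceFinset_eq_filter, SimpleGraph.card_incidenceFinset_eq_degree, hG u]
  have hall := Finset.card_filter_add_card_filter_not (s := G.edgeFinset) (u ∈ ·)
  have hdeg := G.sum_degrees_eq_twice_card_edges
  simp only [hG.degree_eq, Finset.sum_const, Finset.card_univ, smul_eq_mul] at hdeg
  refine Nat.eq_of_mul_eq_mul_left two_pos ?_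
  zify at hat hall hdeg hk ⊢
  linear_combination 2 * (p : ℤ) * (hall - hat) - (p : ℤ) * hdeg + (Fintype.card V - 2 : ℤ) * hk

section Integrand

variable {V E : Type*} [NormedAddCommGroup E]

/-- The factor `‖x i - x j‖ ^ (-p)` contributed by the edge `ij` to the Feynman integrand, when the
vertex `u` is sent to infinity: the edges at `u` contribute `1`. The value at `x i = x j` is `0`. -/
noncomputable def propagator (p : ℕ) (u : V) (x : V → E) (ed : Sym2 V) : ℝ≥0 :=
  if u ∈ ed then 1 else
    Sym2.lift ⟨fun i j => (‖x i - x j‖₊ ^ p)⁻¹, fun i j => by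
      simp only [← nndist_eq_nnnorm, nndist_comm]⟩ ed

theorem propagator_mk (p : ℕ) (u : V) (x : V → E) (i j : V) :
    propagator p u x s(i, j) = if u = i ∨ u = j then 1 else (‖x i - x j‖₊ ^ p)⁻¹ := by
  simp only [propagator, Sym2.mem_iff, Sym2.lift_mk]

theorem propagator_map {V' : Type*} {f : V → V'} (hf : f.Injective) (p : ℕ) (u : V) (x : V' → E)
    (ed : Sym2 V) : propagator p (f u) x (ed.map f) = propagator p u (x ∘ f) ed := by
  induction ed using Sym2.ind with
  | _ i j => simp [propagator_mk, hf.eq_iff]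

theorem propagator_of_nnnorm_sub_eq {r : ℝ≥0} {x y : V → E} {u : V}
    (h : ∀ i j, i ≠ u → j ≠ u → ‖y i - y j‖₊ = r * ‖x i - x j‖₊) (p : ℕ) (ed : Sym2 V) :
    propagator p u y ed = (if u ∉ ed then (r ^ p)⁻¹ else 1) * propagator p u x ed := by
  induction ed using Sym2.ind with
  | _ i j =>
    by_cases hu : u = i ∨ u = j
    · simp [propagator_mk, hu]
    · obtain ⟨hi, hj⟩ := not_or.1 hu
      simp [propagator_mk, hu, h i j (Ne.symm hi) (Ne.symm hj), mul_pow, mul_comm]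

variable [Fintype V]

/-- The position-space integrand of the graph `G`, in which the edges carry the exponent `p` and the
vertex `u` is at infinity. -/
noncomputable def feynmanIntegrand (G : SimpleGraph V) (p : ℕ) (u : V) (x : V → E) : ℝ≥0 :=
  ∏ ed ∈ G.edgeFinset, propagator p u x ed

theorem feynmanIntegrand_of_nnnorm_sub_eq (G : SimpleGraph V) (p : ℕ) {r : ℝ≥0} {x y : V → E}
    {u : V} (h : ∀ i j, i ≠ u → j ≠ u → ‖y i - y j‖₊ = r * ‖x i - x j‖₊) :
    feynmanIntegrand G p u y
      = (r ^ p)⁻¹ ^ (G.edgeFinset.filter (u ∉ ·)).card * feynmanIntegrand G p u x := by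
  simp only [feynmanIntegrand, propagator_of_nnnorm_sub_eq h, Finset.prod_mul_distrib,
    ← Finset.prod_filter, Finset.prod_const]

theorem feynmanIntegrand_congr (G : SimpleGraph V) (p : ℕ) {x y : V → E} {u : V}
    (h : ∀ i ≠ u, y i = x i) : feynmanIntegrand G p u y = feynmanIntegrand G p u x := by
  simpa using feynmanIntegrand_of_nnnorm_sub_eq G p (r := 1) fun i j hi hj => by
    rw [h i hi, h j hj, one_mul]

theorem feynmanIntegrand_eq_mul_prod_pow_degree (G : SimpleGraph V) (p : ℕ) {u w : V} {x y : V → E}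
    (n : V → ℝ≥0)
    (h : ∀ i j, i ≠ j → propagator p w y s(i, j) = propagator p u x s(i, j) * (n i * n j)) :
    feynmanIntegrand G p w y = feynmanIntegrand G p u x * ∏ v, n v ^ G.degree v := by
  rw [feynmanIntegrand, feynmanIntegrand, ← prod_edgeFinset_mul_map, ← Finset.prod_mul_distrib]
  refine Finset.prod_congr rfl fun ed hed => ?_
  induction ed using Sym2.ind with
  | _ i j => exact h i j (G.ne_of_adj (SimpleGraph.mem_edgeFinset.1 hed))

theorem measurable_feynmanIntegrand [MeasurableSpace E] [BorelSpace E] [SecondCountableTopology E]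
    (G : SimpleGraph V) (p : ℕ) (u : V) :
    Measurable fun x : V → E => (feynmanIntegrand G p u x : ℝ≥0∞) := by
  refine (Finset.measurable_fun_prod _ fun ed _ => ?_).coe_nnreal_ennreal
  induction ed using Sym2.ind with
  | _ i j =>
    simp only [propagator_mk]
    split_ifs <;> fun_prop

end Integrand

section Inversion

variable {V E : Type*} [NormedAddCommGroup E] [InnerProductSpace ℝ E]

theorem nnnorm_inversion_sub_inversion {x y : E} (hx : x ≠ 0) (hy : y ≠ 0) :
    ‖inversion 0 1 x - inversion 0 1 y‖₊ = ‖x - y‖₊ * (‖x‖₊ * ‖y‖₊)⁻¹ := by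
  have h := EuclideanGeometry.dist_inversion_inversion hx hy 1
  rw [dist_zero_right, dist_zero_right, dist_eq_norm, dist_eq_norm] at h
  exact NNReal.eq <| by simp [h, mul_comm]

theorem nnnorm_inversion_zero_one (x : E) : ‖inversion 0 1 x‖₊ = ‖x‖₊⁻¹ := by
  have h := EuclideanGeometry.dist_inversion_center (0 : E) x 1
  rw [dist_zero_right, dist_zero_right] at h
  exact NNReal.eq <| by simp [h]

theorem exists_linearIsometryEquiv_smul_eq {e y : E} (he : ‖e‖ = 1) (hy : y ≠ 0) :
    ∃ A : E ≃ₗᵢ[ℝ] E, ‖y‖ • A e = y ∧ ‖y‖ • A (inversion 0 1 y) = e := by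
  have hy' : ‖y‖ ≠ 0 := norm_ne_zero_iff.2 hy
  have hnorm : ‖e‖ = ‖‖y‖⁻¹ • y‖ := by rw [norm_smul, norm_inv, norm_norm, inv_mul_cancel₀ hy', he]
  have hA := Submodule.reflection_sub hnorm
  refine ⟨(ℝ ∙ (e - ‖y‖⁻¹ • y))ᗮ.reflection, ?_, ?_⟩
  · rw [hA, smul_inv_smul₀ hy']
  · have hinv : inversion 0 1 y = ‖y‖⁻¹ • ‖y‖⁻¹ • y := by
      simp [EuclideanGeometry.inversion, smul_smul, sq]
    rw [hinv, map_smul, smul_inv_smul₀ hy']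
    simpa using (congrArg (ℝ ∙ (e - ‖y‖⁻¹ • y))ᗮ.reflection hA).symm

/-- The inversion exchanges the origin, where `w` is, and infinity, where `u` is. -/
theorem propagator_inversion (p : ℕ) {u w : V} (huw : u ≠ w) {x : V → E}
    (hu : x u = 0) (hw : x w = 0) (hx : ∀ v, v ≠ u → v ≠ w → x v ≠ 0)
    {i j : V} (hij : i ≠ j) :
    propagator p w (fun v => inversion 0 1 (x v)) s(i, j)
      = propagator p u x s(i, j) * ((if i = u ∨ i = w then 1 else ‖x i‖₊ ^ p)
        * (if j = u ∨ j = w then 1 else ‖x j‖₊ ^ p)) := by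
  wlog h : (i = u ∨ i = w) → (j = u ∨ j = w) generalizing i j
  · rw [Sym2.eq_swap, this hij.symm (by tauto), mul_comm (ite (j = u ∨ j = w) _ _)]
  by_cases hi : i = u ∨ i = w
  · have hends : s(i, j) = s(u, w) := by rw [Sym2.eq_iff]; grind
    simp [hends, propagator_mk, hi, h hi]
  obtain ⟨hiu, hiw⟩ : i ≠ u ∧ i ≠ w := not_or.1 hi
  have hpow : ‖x i‖₊ ^ p ≠ 0 := pow_ne_zero _ (nnnorm_ne_zero_iff.2 (hx i hiu hiw))
  rcases eq_or_ne j u with rfl | hju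
  · simp [propagator_mk, hi, hu, hiw.symm, huw.symm, nnnorm_inversion_zero_one]
  rcases eq_or_ne j w with rfl | hjw
  · simp [propagator_mk, hi, hw, hiu.symm, hju.symm, inv_mul_cancel₀ hpow]
  · simp [propagator_mk, hi, hju, hjw, hju.symm, hjw.symm, hiu.symm, hiw.symm,
      nnnorm_inversion_sub_inversion (hx i hiu hiw) (hx j hju hjw), mul_pow, mul_comm]

theorem feynmanIntegrand_inversion [Fintype V] {G : SimpleGraph V} {k : ℕ}
    (hG : G.IsRegularOfDegree k) (p : ℕ) {u w : V} (huw : u ≠ w) {x : V → E} (hu : x u = 0)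
    (hw : x w = 0) (hx : ∀ v, v ≠ u → v ≠ w → x v ≠ 0) :
    feynmanIntegrand G p w (fun v => inversion 0 1 (x v))
      = feynmanIntegrand G p u x * ∏ v ∈ {u, w}ᶜ, ‖x v‖₊ ^ (k * p) := by
  rw [feynmanIntegrand_eq_mul_prod_pow_degree G p _
    fun i j hij => propagator_inversion p huw hu hw hx hij,
    ← Finset.prod_subset (Finset.subset_univ {u, w}ᶜ) fun v _ hv => ?_]
  · refine congrArg _ (Finset.prod_congr rfl fun v hv => ?_)
    have hv' : ¬ (v = u ∨ v = w) := by simpa using hv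
    rw [hG.degree_eq, if_neg hv', ← pow_mul, mul_comm]
  · have hv' : v = u ∨ v = w := by simpa [or_iff_not_imp_left] using hv
    rw [if_pos hv', one_pow]

end Inversion

/-! ### Invariance of the period integral -/

theorem eq_of_swap_of_congr_third {V α : Type*} (P : V → V → V → α)
    (hswap₁₂ : ∀ {u w z}, u ≠ w → u ≠ z → w ≠ z → P w u z = P u w z)
    (hswap₂₃ : ∀ {u w z}, u ≠ w → u ≠ z → w ≠ z → P u z w = P u w z)
    (hthird : ∀ {u w z z'}, u ≠ w → u ≠ z → w ≠ z → u ≠ z' → w ≠ z' → P u w z = P u w z')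
    {u w z u' w' z' : V} (huw : u ≠ w) (huz : u ≠ z) (hwz : w ≠ z)
    (huw' : u' ≠ w') (huz' : u' ≠ z') (hwz' : w' ≠ z') : P u w z = P u' w' z' := by
  have hsecond {u w w' z : V} (huw : u ≠ w) (huz : u ≠ z) (hwz : w ≠ z) (huw' : u ≠ w')
      (hwz' : w' ≠ z) : P u w z = P u w' z := by
    rw [← hswap₂₃ huw huz hwz, hthird huz huw hwz.symm huw' hwz'.symm, hswap₂₃ huw' huz hwz']
  have hfirst {u u' w z : V} (huw : u ≠ w) (huz : u ≠ z) (hwz : w ≠ z) (huw' : u' ≠ w)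
      (huz' : u' ≠ z) : P u w z = P u' w z := by
    rw [← hswap₁₂ huw huz hwz, hsecond huw.symm hwz huz huw'.symm huz', hswap₁₂ huw' huz' hwz]
  obtain ⟨u₁, w₁, hu₁w₁, hu₁z', hw₁z', hP₁⟩ :
      ∃ u₁ w₁, u₁ ≠ w₁ ∧ u₁ ≠ z' ∧ w₁ ≠ z' ∧ P u w z = P u₁ w₁ z' := by
    rcases eq_or_ne z' u with rfl | hz'u
    · exact ⟨w, z, hwz, huw.symm, huz.symm, by rw [hswap₂₃ huw.symm hwz huz, hswap₁₂ huw huz hwz]⟩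
    rcases eq_or_ne z' w with rfl | hz'w
    · exact ⟨u, z, huz, huw, hwz.symm, (hswap₂₃ huw huz hwz).symm⟩
    · exact ⟨u, w, huw, hz'u.symm, hz'w.symm, hthird huw huz hwz hz'u.symm hz'w.symm⟩
  obtain ⟨u₂, hu₂w', hu₂z', hP₂⟩ : ∃ u₂, u₂ ≠ w' ∧ u₂ ≠ z' ∧ P u₁ w₁ z' = P u₂ w' z' := by
    rcases eq_or_ne w' u₁ with rfl | hw'u₁
    · exact ⟨w₁, hu₁w₁.symm, hw₁z', (hswap₁₂ hu₁w₁ hu₁z' hw₁z').symm⟩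
    · exact ⟨u₁, hw'u₁.symm, hu₁z', hsecond hu₁w₁ hu₁z' hw₁z' hw'u₁.symm hwz'⟩
  rw [hP₁, hP₂, hfirst hu₂w' hu₂z' hwz' huw' huz']

section Invariance

variable {V E : Type*} [Fintype V] [NormedAddCommGroup E] [InnerProductSpace ℝ E]
  [FiniteDimensional ℝ E] [MeasurableSpace E] [BorelSpace E]

/-- The integral of the Feynman integrand over the positions of the vertices in `s`, as a function
of the positions of all vertices; it depends only on those outside `s` and distinct from `u`. -/
noncomputable def integrateOut (G : SimpleGraph V) (p : ℕ) (u : V) (s : Finset V) (x : V → E) :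
    ℝ≥0∞ :=
  (∫⋯∫⁻_s, fun y => (feynmanIntegrand G p u y : ℝ≥0∞)) x

/-- The unnormalised period with values in `[0, ∞]`: the vertex `u` is at infinity, `w` at the
origin, `z` at `e`, and the other positions are integrated out. The position `0` that `Pi.single`
gives to `u` is a dummy. -/
noncomputable def positionLIntegral (G : SimpleGraph V) (p : ℕ) (u w z : V) (e : E) : ℝ≥0∞ :=
  integrateOut G p u {u, w, z}ᶜ (Pi.single z e)

/-- The period integral before the integration over the position of a second finite vertex `z'`:
the vertex `u` is at infinity, `w` at the origin, `z` at `a` and `z'` at `b`. -/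
noncomputable def fourPointLIntegral (G : SimpleGraph V) (p : ℕ) (u w z z' : V) (a b : E) : ℝ≥0∞ :=
  integrateOut G p u {u, w, z, z'}ᶜ ((Pi.single z a : V → E) + Pi.single z' b)

variable (G : SimpleGraph V) (p : ℕ)

theorem integrateOut_congr {u : V} {s : Finset V} {x y : V → E}
    (h : ∀ i ∉ s, i ≠ u → y i = x i) : integrateOut G p u s y = integrateOut G p u s x := by
  refine lintegral_congr fun t => congrArg _ (feynmanIntegrand_congr G p fun i hi => ?_)
  by_cases his : i ∈ s
  · simp [Function.updateFinset, his]
  · simpa [Function.updateFinset, his] using h i his hi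

theorem integrateOut_insert (u : V) {s : Finset V} {i : V} (hi : i ∉ s) (x : V → E) :
    integrateOut G p u (insert i s) x = ∫⁻ a, integrateOut G p u s (Function.update x i a) :=
  lmarginal_insert _ (measurable_feynmanIntegrand G p u) hi x

theorem integrateOut_similarity (u : V) (s : Finset V) (A : E ≃ₗᵢ[ℝ] E) (b : E) {r : ℝ≥0}
    (hr : r ≠ 0) (x : V → E) :
    integrateOut G p u s (fun v => (r : ℝ) • A (x v) + b)
      = ((r ^ p)⁻¹ ^ (G.edgeFinset.filter (u ∉ ·)).card * (r ^ Module.finrank ℝ E) ^ s.card : ℝ≥0)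
        * integrateOut G p u s x := by
  have hnorm (y : V → E) (i j : V) :
      ‖((r : ℝ) • A (y i) + b) - ((r : ℝ) • A (y j) + b)‖₊ = r * ‖y i - y j‖₊ := by
    rw [add_sub_add_right_eq_sub, ← smul_sub, ← map_sub, nnnorm_smul, NNReal.nnnorm_eq,
      A.nnnorm_map]
  rw [integrateOut, integrateOut, ← lmarginal_comp_mul_prod (fun _ => measurable_const)
    (fun _ => measurePreserving_similarity A b hr) (measurable_feynmanIntegrand G p u),
    ← lmarginal_mul_left (f := fun _ => ENNReal.ofNNReal _) (measurable_feynmanIntegrand G p u)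
      fun _ _ => rfl]
  refine congrArg (fun f => (∫⋯∫⁻_s, f) x) (funext fun y => ?_)
  rw [feynmanIntegrand_of_nnnorm_sub_eq G p fun i j _ _ => hnorm y i j, Finset.prod_const]
  push_cast
  ring

theorem integrateOut_isometry (u : V) (s : Finset V) (A : E ≃ₗᵢ[ℝ] E) (b : E) (x : V → E) :
    integrateOut G p u s (fun v => A (x v) + b) = integrateOut G p u s x := by
  simpa using integrateOut_similarity G p u s A b one_ne_zero x

theorem positionLIntegral_congr_norm (u w z : V) {e e' : E} (h : ‖e‖ = ‖e'‖) :
    positionLIntegral G p u w z e = positionLIntegral G p u w z e' := by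
  let A := (ℝ ∙ (e - e'))ᗮ.reflection
  have hA : A e = e' := Submodule.reflection_sub h
  rw [positionLIntegral, positionLIntegral, ← integrateOut_isometry G p u _ A 0]
  congr 1 with v
  rw [add_zero, Pi.apply_single (fun _ => A) (fun _ => map_zero A), hA]

theorem positionLIntegral_swap_zero (u : V) {w z : V} (hwz : w ≠ z) (e : E) :
    positionLIntegral G p u z w e = positionLIntegral G p u w z e := by
  rw [positionLIntegral, positionLIntegral,
    ← integrateOut_isometry G p u {u, w, z}ᶜ (LinearIsometryEquiv.neg ℝ) e (Pi.single z e),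
    Finset.pair_comm z w]
  refine integrateOut_congr G p fun i hi hiu => ?_
  obtain rfl | rfl : i = w ∨ i = z := by simpa [hiu, or_iff_not_imp_left] using hi
  · simp [hwz]
  · simp [hwz.symm]

theorem fourPointLIntegral_swap (u w z z' : V) (a b : E) :
    fourPointLIntegral G p u w z z' a b = fourPointLIntegral G p u w z' z b a := by
  rw [fourPointLIntegral, fourPointLIntegral, Finset.pair_comm, add_comm]

theorem positionLIntegral_eq_lintegral_fourPoint {u w z z' : V} (hzz' : z ≠ z') (huz' : u ≠ z')
    (hwz' : w ≠ z') (e : E) :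
    positionLIntegral G p u w z e = ∫⁻ y, fourPointLIntegral G p u w z z' e y := by
  have hcompl : ({u, w, z}ᶜ : Finset V) = insert z' {u, w, z, z'}ᶜ := by
    ext v; rcases eq_or_ne v z' with rfl | hv <;> simp [*, Ne.symm]
  rw [positionLIntegral, hcompl, integrateOut_insert G p u (by simp)]
  refine lintegral_congr fun y => congrArg _ (funext fun v => ?_)
  rcases eq_or_ne v z' with rfl | hv
  · simp [hzz']
  · simp [hv]

theorem measurable_fourPointLIntegral (u w z z' : V) (a : E) :
    Measurable fun b => fourPointLIntegral G p u w z z' a b := by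
  refine (Measurable.lmarginal _ (measurable_feynmanIntegrand G p u)).comp ?_
  simp only [Pi.single]
  fun_prop

variable {G p}

theorem positionLIntegral_swap_infinity {k : ℕ} (hG : G.IsRegularOfDegree k)
    (hk : k * p = 2 * Module.finrank ℝ E) {u w z : V} (huw : u ≠ w) (huz : u ≠ z) (hwz : w ≠ z)
    {e : E} (he : ‖e‖ = 1) : positionLIntegral G p w u z e = positionLIntegral G p u w z e := by
  have he0 : e ≠ 0 := norm_ne_zero_iff.1 (he ▸ one_ne_zero)
  have : Nontrivial E := nontrivial_of_ne e 0 he0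
  have hbase : (fun v => inversion 0 1 (Pi.single (M := fun _ => E) z e v)) = Pi.single z e :=
    funext fun v => by
      rw [Pi.apply_single (fun _ => inversion (0 : E) 1)
        (fun _ => EuclideanGeometry.inversion_self _ _),
        EuclideanGeometry.inversion_of_mem_sphere (mem_sphere_zero_iff_norm.2 he)]
  rw [positionLIntegral, positionLIntegral, Finset.insert_comm, ← hbase, integrateOut,
    ← lmarginal_comp_mul_prod (fun _ => by fun_prop) (fun _ => measurePreserving_inversion_zero_one)
      (measurable_feynmanIntegrand G p w), hbase]
  refine lmarginal_congr_of_ne 0 fun y hy hy0 => ?_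
  have hyz : y z = e := by simp [hy z]
  have hy0' (v : V) (hvu : v ≠ u) (hvw : v ≠ w) : y v ≠ 0 := by
    rcases eq_or_ne v z with rfl | hvz
    · exact hyz ▸ he0
    · exact hy0 v (by simp [hvu, hvw, hvz])
  have hcompl : ({u, w}ᶜ : Finset V) = insert z {u, w, z}ᶜ := by
    ext v; rcases eq_or_ne v z with rfl | hv <;> simp [*, Ne.symm]
  have hyz' : ‖y z‖₊ = 1 := NNReal.eq (by rw [hyz, coe_nnnorm, he, NNReal.coe_one])
  rw [feynmanIntegrand_inversion hG p huw (by simp [hy u, huz]) (by simp [hy w, hwz]) hy0', hcompl,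
    Finset.prod_insert (by simp), hyz', one_pow, one_mul, hk, ← ENNReal.ofNNReal_finsetProd,
    ← ENNReal.coe_mul, mul_assoc, ← Finset.prod_mul_distrib,
    Finset.prod_eq_one fun v hv => mul_inv_cancel₀ <|
      pow_ne_zero _ (nnnorm_ne_zero_iff.2 (hy0 v hv)), mul_one]

theorem pow_mul_integrateOut_smul {k : ℕ} (hG : G.IsRegularOfDegree k)
    (hk : k * p = 2 * Module.finrank ℝ E) (u : V) {s : Finset V}
    (hs : s.card + 4 = Fintype.card V) (A : E ≃ₗᵢ[ℝ] E) {r : ℝ≥0} (hr : r ≠ 0) (x : V → E) :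
    (r ^ (2 * Module.finrank ℝ E) : ℝ≥0) * integrateOut G p u s (fun v => (r : ℝ) • A (x v))
      = integrateOut G p u s x := by
  have h := integrateOut_similarity G p u s A 0 hr x
  simp only [add_zero] at h
  have hpow : r ^ (p * (G.edgeFinset.filter (u ∉ ·)).card)
      = r ^ (2 * Module.finrank ℝ E) * (r ^ Module.finrank ℝ E) ^ s.card := by
    rw [← pow_mul, ← pow_add]
    congr 1
    have hcard := mul_card_edges_avoiding_add hG hk u
    rw [← hs] at hcard
    linarith
  have hr' : r ^ (p * (G.edgeFinset.filter (u ∉ ·)).card) ≠ 0 := pow_ne_zero _ hr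
  rw [h, ← mul_assoc, ← ENNReal.coe_mul, inv_pow, ← pow_mul, mul_left_comm, ← hpow,
    inv_mul_cancel₀ hr', ENNReal.coe_one, one_mul]

theorem pow_mul_fourPointLIntegral_smul {k : ℕ} (hG : G.IsRegularOfDegree k)
    (hk : k * p = 2 * Module.finrank ℝ E) {u w z z' : V}
    (hs : ({u, w, z, z'} : Finset V).card = 4) (A : E ≃ₗᵢ[ℝ] E) {r : ℝ≥0} (hr : r ≠ 0) (a b : E) :
    (r ^ (2 * Module.finrank ℝ E) : ℝ≥0)
        * fourPointLIntegral G p u w z z' ((r : ℝ) • A a) ((r : ℝ) • A b)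
      = fourPointLIntegral G p u w z z' a b := by
  refine Eq.trans (congrArg (fun x : V → E => _ * integrateOut G p u _ x) (funext fun v => ?_))
    (pow_mul_integrateOut_smul hG hk u (hs ▸ Finset.card_compl_add_card _) A hr _)
  simp only [Pi.add_apply, map_add, smul_add]
  have hsingle (z : V) (a : E) : (r : ℝ) • A (Pi.single (M := fun _ => E) z a v)
      = Pi.single (M := fun _ => E) z ((r : ℝ) • A a) v :=
    Pi.apply_single (fun _ x => (r : ℝ) • A x) (by simp) z a v
  rw [hsingle, hsingle]

/-- A similarity fixing the origin takes `(e, ι y)` to `(y, e)`, where `ι` is the inversion. -/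
theorem positionLIntegral_congr_unit {k : ℕ} (hG : G.IsRegularOfDegree k)
    (hk : k * p = 2 * Module.finrank ℝ E) {u w z z' : V} (huw : u ≠ w) (huz : u ≠ z) (hwz : w ≠ z)
    (huz' : u ≠ z') (hwz' : w ≠ z') {e : E} (he : ‖e‖ = 1) :
    positionLIntegral G p u w z e = positionLIntegral G p u w z' e := by
  rcases eq_or_ne z z' with rfl | hzz'
  · rfl
  have : Nontrivial E := nontrivial_of_ne e 0 (norm_ne_zero_iff.1 (he ▸ one_ne_zero))
  have hcard : ({u, w, z, z'} : Finset V).card = 4 := by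
    simp [Finset.card_insert_of_notMem, huw, huz, hwz, huz', hwz', hzz']
  rw [positionLIntegral_eq_lintegral_fourPoint G p hzz' huz' hwz',
    positionLIntegral_eq_lintegral_fourPoint G p hzz'.symm huz hwz]
  simp_rw [fourPointLIntegral_swap G p u w z' z e]
  have hF := measurable_fourPointLIntegral G p u w z z' e
  have hinv := measurePreserving_inversion_zero_one (E := E)
  rw [← hinv.lintegral_comp hF]
  refine (lintegral_withDensity_eq_lintegral_mul _ (by fun_prop) (hF.comp hinv.measurable)).trans
    (lintegral_congr_ae ?_)
  filter_upwards [compl_mem_ae_iff.2 (measure_singleton (0 : E))] with y hy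
  obtain ⟨A, hAe, hAy⟩ := exists_linearIsometryEquiv_smul_eq he hy
  have hscale := pow_mul_fourPointLIntegral_smul hG hk hcard A (nnnorm_ne_zero_iff.2 hy) e
    (inversion 0 1 y)
  rw [coe_nnnorm, hAe, hAy] at hscale
  rw [Pi.mul_apply, Function.comp_apply, ← hscale, ← mul_assoc, ← ENNReal.coe_mul,
    inv_mul_cancel₀ (pow_ne_zero _ (nnnorm_ne_zero_iff.2 hy)), ENNReal.coe_one, one_mul]

theorem positionLIntegral_eq {k : ℕ} (hG : G.IsRegularOfDegree k)
    (hk : k * p = 2 * Module.finrank ℝ E) {u w z u' w' z' : V} (huw : u ≠ w) (huz : u ≠ z)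
    (hwz : w ≠ z) (huw' : u' ≠ w') (huz' : u' ≠ z') (hwz' : w' ≠ z') {e e' : E} (he : ‖e‖ = 1)
    (he' : ‖e'‖ = 1) : positionLIntegral G p u w z e = positionLIntegral G p u' w' z' e' := by
  rw [positionLIntegral_congr_norm G p u w z (he.trans he'.symm)]
  exact eq_of_swap_of_congr_third (fun u w z => positionLIntegral G p u w z e')
    (fun huw huz hwz => positionLIntegral_swap_infinity hG hk huw huz hwz he')
    (fun _ _ hwz => positionLIntegral_swap_zero G p _ hwz e')
    (fun huw huz hwz huz' hwz' => positionLIntegral_congr_unit hG hk huw huz hwz huz' hwz' he')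
    huw huz hwz huw' huz' hwz'

end Invariance

/-! ### The period as an extended nonnegative number -/

/-- The period with values in `[0, ∞]`, for a graph whose edges carry the exponent `p`. Since `ℕ`
subtraction truncates, the normalisation is the intended one only on at least three vertices. -/
noncomputable def extendedPeriod {V E : Type*} [Fintype V] [NormedAddCommGroup E]
    [InnerProductSpace ℝ E] [FiniteDimensional ℝ E] [MeasurableSpace E] [BorelSpace E]
    (G : SimpleGraph V) (p : ℕ) (u w z : V) (e : E) : ℝ≥0∞ :=
  (ENNReal.ofReal (Real.pi ^ (p * (Fintype.card V - 3))))⁻¹ * positionLIntegral G p u w z e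

section RealPeriod

variable {V : Type*}

theorem measurable_extendPos (u w z : V) (e : R4) : Measurable (extendPos u w z e) := by
  refine measurable_pi_lambda _ fun v => ?_
  unfold extendPos
  split_ifs <;> fun_prop

variable [Fintype V]

theorem periodIntegrand_eq_feynmanIntegrand (G : SimpleGraph V) (u w z : V) (e : R4)
    (x : {v : V // v ≠ u ∧ v ≠ w ∧ v ≠ z} → R4) :
    periodIntegrand G u w z e x = feynmanIntegrand G 2 u (extendPos u w z e x) := by
  rw [periodIntegrand, feynmanIntegrand, NNReal.coe_prod, Finset.prod_filter]
  refine Finset.prod_congr rfl fun ed _ => ?_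
  by_cases hu : u ∈ ed
  · simp [propagator, hu]
  · induction ed using Sym2.ind with
    | _ i j => simp [propagator, hu]

theorem extendPos_eq_updateFinset {u w z : V} (huw : u ≠ w) (huz : u ≠ z) (hwz : w ≠ z) (e : R4)
    (x : ({u, w, z}ᶜ : Finset V) → R4) :
    extendPos u w z e (fun v => x ⟨v, by simpa using v.2⟩)
      = Function.updateFinset (Pi.single z e) {u, w, z}ᶜ x := by
  ext1 v
  by_cases hv : v ∈ ({u, w, z}ᶜ : Finset V)
  · have hv' : v ≠ u ∧ v ≠ w ∧ v ≠ z := by simpa using hv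
    simp [Function.updateFinset, extendPos, hv']
  · obtain rfl | rfl | rfl : v = u ∨ v = w ∨ v = z := by simpa [or_iff_not_imp_left] using hv
    · simp [Function.updateFinset, extendPos, huw, huz]
    · simp [Function.updateFinset, extendPos, hwz]
    · simp [Function.updateFinset, extendPos, hwz.symm]

theorem positionIntegral_eq_toReal_positionLIntegral (G : SimpleGraph V) {u w z : V} (huw : u ≠ w)
    (huz : u ≠ z) (hwz : w ≠ z) (e : R4) :
    positionIntegral G u w z e = (positionLIntegral G 2 u w z e).toReal := by
  have hm : Measurable fun x => (feynmanIntegrand G 2 u (extendPos u w z e x) : ℝ≥0∞) :=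
    (measurable_feynmanIntegrand G 2 u).comp (measurable_extendPos u w z e)
  let ε : ({u, w, z}ᶜ : Finset V) ≃ {v : V // v ≠ u ∧ v ≠ w ∧ v ≠ z} :=
    Equiv.subtypeEquivRight fun v => by simp
  calc positionIntegral G u w z e
      = ∫ x, (feynmanIntegrand G 2 u (extendPos u w z e x) : ℝ≥0∞).toReal := by
        simp only [positionIntegral, periodIntegrand_eq_feynmanIntegrand, ENNReal.coe_toReal]
    _ = (∫⁻ x, (feynmanIntegrand G 2 u (extendPos u w z e x) : ℝ≥0∞)).toReal :=
        integral_toReal hm.aemeasurable (by simp)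
    _ = (∫⁻ x : ({u, w, z}ᶜ : Finset V) → R4, (feynmanIntegrand G 2 u
          (extendPos u w z e fun v => x ⟨v, by simpa using v.2⟩) : ℝ≥0∞)).toReal :=
        congrArg _ ((volume_measurePreserving_piCongrLeft (fun _ => R4) ε).lintegral_comp hm).symm
    _ = (positionLIntegral G 2 u w z e).toReal := by
        simp only [extendPos_eq_updateFinset huw huz hwz]
        rfl

theorem period_eq_toReal_extendedPeriod (G : SimpleGraph V) {u w z : V} (huw : u ≠ w)
    (huz : u ≠ z) (hwz : w ≠ z) (e : R4) :
    period G u w z e = (extendedPeriod G 2 u w z e).toReal := by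
  rw [period, extendedPeriod, ENNReal.toReal_mul, ENNReal.toReal_inv,
    ENNReal.toReal_ofReal (by positivity),
    positionIntegral_eq_toReal_positionLIntegral G huw huz hwz]

end RealPeriod

/-! ### Gluing along triangles -/

section Triangle

variable {V M : Type*}

/-- The graph `G` without the edges of the triangle `abc`. -/
def deleteTriangle (G : SimpleGraph V) (a b c : V) : SimpleGraph V :=
  G.deleteEdges {s(a, b), s(b, c), s(a, c)}

theorem deleteTriangle_adj {G : SimpleGraph V} {a b c x y : V} :
    (deleteTriangle G a b c).Adj x y
      ↔ G.Adj x y ∧ ¬ (InTriangle a b c x ∧ InTriangle a b c y) := by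
  rw [deleteTriangle, SimpleGraph.deleteEdges_adj]
  refine and_congr_right fun hxy => not_congr ?_
  have hne := hxy.ne
  simp only [Set.mem_insert_iff, Set.mem_singleton_iff, Sym2.eq_iff, InTriangle]
  grind

theorem sum_eq_add_sum_compl_triangle [Fintype V] [AddCommMonoid M] {a b c : V} (hab : a ≠ b)
    (hbc : b ≠ c) (hac : a ≠ c) (f : V → M) :
    ∑ v, f v = f a + (f b + f c) + ∑ v ∈ {a, b, c}ᶜ, f v := by
  rw [← Finset.sum_add_sum_compl {a, b, c}, Finset.sum_insert (by simp [hab, hac]),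
    Finset.sum_pair hbc]

@[to_additive]
theorem prod_edgeFinset_deleteTriangle [Fintype V] [CommMonoid M] {G : SimpleGraph V} {a b c : V}
    (ht : G.Adj a b ∧ G.Adj b c ∧ G.Adj a c) (g : Sym2 V → M) :
    (∏ ed ∈ (deleteTriangle G a b c).edgeFinset, g ed) * (g s(a, b) * (g s(b, c) * g s(a, c)))
      = ∏ ed ∈ G.edgeFinset, g ed := by
  obtain ⟨hab, hbc, hac⟩ := ht
  have hsub : {s(a, b), s(b, c), s(a, c)} ⊆ G.edgeFinset := by
    simp [Finset.insert_subset_iff, hab, hbc, hac]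
  have hedges : (deleteTriangle G a b c).edgeFinset
      = G.edgeFinset \ {s(a, b), s(b, c), s(a, c)} := by
    ext ed
    rw [SimpleGraph.mem_edgeFinset, deleteTriangle, SimpleGraph.edgeSet_deleteEdges]
    simp
  rw [hedges, ← Finset.prod_sdiff hsub, Finset.prod_insert, Finset.prod_pair]
  · simp [hbc.ne, hab.ne']
  · simp [hab.ne, hab.ne', hac.ne, hbc.ne]

@[to_additive]
theorem prod_edgeFinset_map_sup_map {V₁ V₂ : Type*} [Fintype V] [Fintype V₁] [Fintype V₂]
    [CommMonoid M] {H₁ : SimpleGraph V₁} {H₂ : SimpleGraph V₂} {i : V₁ → V} {j : V₂ → V}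
    (hi : i.Injective) (hj : j.Injective) (hdisj : Disjoint (H₁.map i) (H₂.map j))
    (g : Sym2 V → M) :
    ∏ ed ∈ (H₁.map i ⊔ H₂.map j).edgeFinset, g ed
      = (∏ ed ∈ H₁.edgeFinset, g (ed.map i)) * ∏ ed ∈ H₂.edgeFinset, g (ed.map j) := by
  rw [SimpleGraph.edgeFinset_sup, Finset.prod_union (SimpleGraph.disjoint_edgeFinset.2 hdisj)]
  congr 1
  · exact (Finset.prod_congr (SimpleGraph.edgeFinset_map ⟨i, hi⟩ H₁) fun _ _ => rfl).trans
      (Finset.prod_map _ _ _)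
  · exact (Finset.prod_congr (SimpleGraph.edgeFinset_map ⟨j, hj⟩ H₂) fun _ _ => rfl).trans
      (Finset.prod_map _ _ _)

end Triangle

/-- The graph `G` on `V` is the gluing of `G₁` and `G₂` along the triangles `a₁b₁c₁` and `a₂b₂c₂`:
the vertices of `G` are the union of copies `i V₁` and `j V₂` that meet exactly in the identified
triangle vertices, and its edges are those of `G₁` and `G₂` outside the two triangles. -/
structure IsTriangleGluing {V V₁ V₂ : Type*} (G : SimpleGraph V) (G₁ : SimpleGraph V₁)
    (G₂ : SimpleGraph V₂) (i : V₁ → V) (j : V₂ → V) (a₁ b₁ c₁ : V₁) (a₂ b₂ c₂ : V₂) : Prop where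
  triangle₁ : G₁.Adj a₁ b₁ ∧ G₁.Adj b₁ c₁ ∧ G₁.Adj a₁ c₁
  triangle₂ : G₂.Adj a₂ b₂ ∧ G₂.Adj b₂ c₂ ∧ G₂.Adj a₂ c₂
  injective₁ : i.Injective
  injective₂ : j.Injective
  eq_iff : ∀ x y, i x = j y ↔ x = a₁ ∧ y = a₂ ∨ x = b₁ ∧ y = b₂ ∨ x = c₁ ∧ y = c₂
  mem_range : ∀ v, v ∈ Set.range i ∨ v ∈ Set.range j
  eq_map_sup_map : G = (deleteTriangle G₁ a₁ b₁ c₁).map i ⊔ (deleteTriangle G₂ a₂ b₂ c₂).map j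

namespace IsTriangleGluing

variable {V V₁ V₂ : Type*} {G : SimpleGraph V} {G₁ : SimpleGraph V₁}
  {G₂ : SimpleGraph V₂} {i : V₁ → V} {j : V₂ → V} {a₁ b₁ c₁ : V₁} {a₂ b₂ c₂ : V₂}

theorem apply_eq (h : IsTriangleGluing G G₁ G₂ i j a₁ b₁ c₁ a₂ b₂ c₂) :
    i a₁ = j a₂ ∧ i b₁ = j b₂ ∧ i c₁ = j c₂ := by
  simp [h.eq_iff]

theorem inTriangle₁ (h : IsTriangleGluing G G₁ G₂ i j a₁ b₁ c₁ a₂ b₂ c₂) {x : V₁}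
    (hx : i x ∈ Set.range j) : InTriangle a₁ b₁ c₁ x := by
  obtain ⟨y, hy⟩ := hx
  exact ((h.eq_iff x y).1 hy.symm).imp And.left (Or.imp And.left And.left)

theorem inTriangle₂ (h : IsTriangleGluing G G₁ G₂ i j a₁ b₁ c₁ a₂ b₂ c₂) {y : V₂}
    (hy : j y ∈ Set.range i) : InTriangle a₂ b₂ c₂ y := by
  obtain ⟨x, hx⟩ := hy
  exact ((h.eq_iff x y).1 hx).imp And.right (Or.imp And.right And.right)

theorem notMem_range₁ [Fintype V₁] (h : IsTriangleGluing G G₁ G₂ i j a₁ b₁ c₁ a₂ b₂ c₂) :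
    ∀ x ∈ ({a₁, b₁, c₁}ᶜ : Finset V₁), i x ∉ Set.range j := fun x hx hxj =>
  Finset.mem_compl.1 hx (by simpa [InTriangle] using h.inTriangle₁ hxj)

theorem notMem_range₂ [Fintype V₂] (h : IsTriangleGluing G G₁ G₂ i j a₁ b₁ c₁ a₂ b₂ c₂) :
    ∀ y ∈ ({a₂, b₂, c₂}ᶜ : Finset V₂), j y ∉ Set.range i := fun y hy hyi =>
  Finset.mem_compl.1 hy (by simpa [InTriangle] using h.inTriangle₂ hyi)

theorem disjoint_map_map (h : IsTriangleGluing G G₁ G₂ i j a₁ b₁ c₁ a₂ b₂ c₂) :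
    Disjoint ((deleteTriangle G₁ a₁ b₁ c₁).map i) ((deleteTriangle G₂ a₂ b₂ c₂).map j) := by
  rw [SimpleGraph.disjoint_left]
  rintro _ _ ⟨-, x, y, hxy, rfl, rfl⟩ ⟨-, x', y', -, hx, hy⟩
  exact (deleteTriangle_adj.1 hxy).2 ⟨h.inTriangle₁ ⟨x', hx⟩, h.inTriangle₁ ⟨y', hy⟩⟩

variable [Fintype V] [Fintype V₁] [Fintype V₂]

theorem compl_triangle_eq (h : IsTriangleGluing G G₁ G₂ i j a₁ b₁ c₁ a₂ b₂ c₂) :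
    ({i a₁, i b₁, i c₁}ᶜ : Finset V)
      = ({a₁, b₁, c₁}ᶜ : Finset V₁).image i ∪ ({a₂, b₂, c₂}ᶜ : Finset V₂).image j := by
  obtain ⟨ha, hb, hc⟩ := h.apply_eq
  ext v
  simp only [Finset.mem_union, Finset.mem_image, Finset.mem_compl, Finset.mem_insert,
    Finset.mem_singleton]
  constructor
  · intro hv
    rcases h.mem_range v with ⟨x, rfl⟩ | ⟨y, rfl⟩
    · exact Or.inl ⟨x, fun hx => hv (by grind), rfl⟩
    · exact Or.inr ⟨y, fun hy => hv (by grind), rfl⟩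
  · rintro (⟨x, hx, rfl⟩ | ⟨y, hy, rfl⟩)
    · simpa only [h.injective₁.eq_iff] using hx
    · simpa only [ha, hb, hc, h.injective₂.eq_iff] using hy

@[to_additive]
theorem prod_edgeFinset {M : Type*} [CommMonoid M]
    (h : IsTriangleGluing G G₁ G₂ i j a₁ b₁ c₁ a₂ b₂ c₂) (g : Sym2 V → M) :
    (∏ ed ∈ G.edgeFinset, g ed)
        * (g s(i a₁, i b₁) * (g s(i b₁, i c₁) * g s(i a₁, i c₁))) ^ 2
      = (∏ ed ∈ G₁.edgeFinset, g (ed.map i)) * ∏ ed ∈ G₂.edgeFinset, g (ed.map j) := by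
  obtain ⟨ha, hb, hc⟩ := h.apply_eq
  have hG : ∏ ed ∈ G.edgeFinset, g ed = (∏ ed ∈ (deleteTriangle G₁ a₁ b₁ c₁).edgeFinset,
      g (ed.map i)) * ∏ ed ∈ (deleteTriangle G₂ a₂ b₂ c₂).edgeFinset, g (ed.map j) := by
    obtain rfl := h.eq_map_sup_map
    convert prod_edgeFinset_map_sup_map h.injective₁ h.injective₂ h.disjoint_map_map g
  rw [hG, ← prod_edgeFinset_deleteTriangle h.triangle₁, sq, mul_mul_mul_comm,
    ← prod_edgeFinset_deleteTriangle h.triangle₂]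
  simp only [Sym2.map_mk, ha, hb, hc]

theorem sum_add_sum {M : Type*} [AddCommMonoid M]
    (h : IsTriangleGluing G G₁ G₂ i j a₁ b₁ c₁ a₂ b₂ c₂) (f : V → M) :
    ∑ x, f (i x) + ∑ y, f (j y) = ∑ v, f v + (f (i a₁) + (f (i b₁) + f (i c₁))) := by
  obtain ⟨ha, hb, hc⟩ := h.apply_eq
  obtain ⟨hab₁, hbc₁, hac₁⟩ := h.triangle₁
  obtain ⟨hab₂, hbc₂, hac₂⟩ := h.triangle₂
  have hdisj : Disjoint (({a₁, b₁, c₁}ᶜ : Finset V₁).image i)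
      (({a₂, b₂, c₂}ᶜ : Finset V₂).image j) :=
    Finset.disjoint_left.2 fun v hv hv' => by
      obtain ⟨x, hx, rfl⟩ := Finset.mem_image.1 hv
      obtain ⟨y, -, hy⟩ := Finset.mem_image.1 hv'
      exact h.notMem_range₁ x hx ⟨y, hy⟩
  rw [sum_eq_add_sum_compl_triangle hab₁.ne hbc₁.ne hac₁.ne fun x => f (i x),
    sum_eq_add_sum_compl_triangle hab₂.ne hbc₂.ne hac₂.ne fun y => f (j y),
    sum_eq_add_sum_compl_triangle (h.injective₁.ne hab₁.ne) (h.injective₁.ne hbc₁.ne)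
      (h.injective₁.ne hac₁.ne), h.compl_triangle_eq, Finset.sum_union hdisj,
    Finset.sum_image h.injective₁.injOn, Finset.sum_image h.injective₂.injOn, ← ha, ← hb, ← hc]
  abel

theorem card_sub_three (h : IsTriangleGluing G G₁ G₂ i j a₁ b₁ c₁ a₂ b₂ c₂) :
    Fintype.card V - 3 = (Fintype.card V₁ - 3) + (Fintype.card V₂ - 3) := by
  have hcard : Fintype.card V₁ + Fintype.card V₂ = Fintype.card V + 3 := by
    simpa using h.sum_add_sum fun _ => (1 : ℕ)
  have hcard₁ : 2 < Fintype.card V₁ := Fintype.two_lt_card_iff.2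
    ⟨a₁, b₁, c₁, h.triangle₁.1.ne, h.triangle₁.2.2.ne, h.triangle₁.2.1.ne⟩
  have hcard₂ : 2 < Fintype.card V₂ := Fintype.two_lt_card_iff.2
    ⟨a₂, b₂, c₂, h.triangle₂.1.ne, h.triangle₂.2.2.ne, h.triangle₂.2.1.ne⟩
  omega

theorem isRegularOfDegree_four (h : IsTriangleGluing G G₁ G₂ i j a₁ b₁ c₁ a₂ b₂ c₂)
    (hG₁ : G₁.IsRegularOfDegree 4) (hG₂ : G₂.IsRegularOfDegree 4) : G.IsRegularOfDegree 4 := by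
  have hsum (f : V → ℕ) : ∑ v, G.degree v * f v = ∑ v, 4 * f v := by
    have hedges := h.sum_edgeFinset fun ed => (ed.map f).add
    simp only [Sym2.map_map, Sym2.map_mk, Sym2.add_mk, sum_edgeFinset_add_map, hG₁.degree_eq,
      hG₂.degree_eq, smul_eq_mul, ← Finset.mul_sum, Function.comp_apply] at hedges ⊢
    have hvert := h.sum_add_sum f
    linarith
  intro v
  simpa [Pi.single_apply] using hsum (Pi.single v 1)

variable {E : Type*} [NormedAddCommGroup E]

theorem feynmanIntegrand_eq_mul (h : IsTriangleGluing G G₁ G₂ i j a₁ b₁ c₁ a₂ b₂ c₂) (p : ℕ)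
    {x : V → E} (hx : ‖x (i b₁) - x (i c₁)‖ = 1) :
    feynmanIntegrand G p (i a₁) x
      = feynmanIntegrand G₁ p a₁ (x ∘ i) * feynmanIntegrand G₂ p a₂ (x ∘ j) := by
  have htriangle : propagator p (i a₁) x s(i b₁, i c₁) = 1 := by
    have hx' : ‖x (i b₁) - x (i c₁)‖₊ = 1 := NNReal.eq hx
    simp [propagator_mk, hx']
  have hedges := h.prod_edgeFinset (propagator p (i a₁) x)
  rw [htriangle] at hedges
  simp only [propagator_mk p _ _ (i a₁), true_or, if_true, mul_one, one_pow] at hedges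
  simp only [feynmanIntegrand, hedges, propagator_map h.injective₁]
  simp only [h.apply_eq.1, propagator_map h.injective₂]

variable [InnerProductSpace ℝ E] [FiniteDimensional ℝ E] [MeasurableSpace E] [BorelSpace E]

/-- With `a`, `b`, `c` at infinity, `0`, `e`, the triangle edges contribute `1`, and no edge
connects an integrated vertex of `G₁` with one of `G₂`. -/
theorem positionLIntegral_eq_mul (h : IsTriangleGluing G G₁ G₂ i j a₁ b₁ c₁ a₂ b₂ c₂) (p : ℕ)
    {e : E} (he : ‖e‖ = 1) :
    positionLIntegral G p (i a₁) (i b₁) (i c₁) e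
      = positionLIntegral G₁ p a₁ b₁ c₁ e * positionLIntegral G₂ p a₂ b₂ c₂ e := by
  have hsplit := lmarginal_image_union_image (μ := fun _ : V => (volume : Measure E))
    (x := Pi.single (i c₁) e) h.injective₁ h.injective₂ h.notMem_range₁ h.notMem_range₂
    (measurable_feynmanIntegrand G₁ p a₁) (measurable_feynmanIntegrand G₂ p a₂)
  have hc₁ : (fun x => (Pi.single (i c₁) e : V → E) (i x)) = Pi.single c₁ e := by
    ext1 x
    simp [Pi.single_apply, h.injective₁.eq_iff]
  have hc₂ : (fun y => (Pi.single (i c₁) e : V → E) (j y)) = Pi.single c₂ e := by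
    ext1 y
    simp [Pi.single_apply, h.apply_eq.2.2, h.injective₂.eq_iff]
  rw [← h.compl_triangle_eq, hc₁, hc₂] at hsplit
  refine Eq.trans (lintegral_congr fun t => Eq.trans
    (congrArg _ (h.feynmanIntegrand_eq_mul p ?_)) (ENNReal.coe_mul _ _)) hsplit
  simp [Function.updateFinset, h.injective₁.eq_iff, h.triangle₁.2.1.ne, he]

end IsTriangleGluing

namespace GluedVert

variable {W₁ W₂ : Type*}

/-- The inclusion of the vertices of the first graph into those of the glued graph. -/
def left (a₂ b₂ c₂ : W₂) (x : W₁) : GluedVert W₁ W₂ a₂ b₂ c₂ := Sum.inl x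

/-- The inclusion of the vertices of the second graph into those of the glued graph: `a₂`, `b₂`,
`c₂` are sent to `a₁`, `b₁`, `c₁`. -/
noncomputable def right (a₁ b₁ c₁ : W₁) (a₂ b₂ c₂ y : W₂) : GluedVert W₁ W₂ a₂ b₂ c₂ :=
  if hy : InTriangle a₂ b₂ c₂ y then
    left a₂ b₂ c₂ (if y = a₂ then a₁ else if y = b₂ then b₁ else c₁)
  else Sum.inr ⟨y, hy⟩

variable {a₁ b₁ c₁ : W₁} {a₂ b₂ c₂ : W₂}

theorem left_injective : (left (W₁ := W₁) a₂ b₂ c₂).Injective := Sum.inl_injective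

theorem right_of_inTriangle {y : W₂} (hy : InTriangle a₂ b₂ c₂ y) :
    right a₁ b₁ c₁ a₂ b₂ c₂ y
      = left a₂ b₂ c₂ (if y = a₂ then a₁ else if y = b₂ then b₁ else c₁) :=
  dif_pos hy

theorem right_of_not_inTriangle {y : W₂} (hy : ¬ InTriangle a₂ b₂ c₂ y) :
    right a₁ b₁ c₁ a₂ b₂ c₂ y = Sum.inr ⟨y, hy⟩ :=
  dif_neg hy

theorem right_eq_left_iff (hab : a₂ ≠ b₂) (hbc : b₂ ≠ c₂) (hac : a₂ ≠ c₂) {x : W₁} {y : W₂} :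
    right a₁ b₁ c₁ a₂ b₂ c₂ y = left a₂ b₂ c₂ x
      ↔ y = a₂ ∧ x = a₁ ∨ y = b₂ ∧ x = b₁ ∨ y = c₂ ∧ x = c₁ := by
  by_cases hy : InTriangle a₂ b₂ c₂ y
  · rw [right_of_inTriangle hy, left_injective.eq_iff]
    rcases hy with rfl | rfl | rfl
    · simp [hab, hac, eq_comm]
    · simp [hab.symm, hbc, eq_comm]
    · simp [hac.symm, hbc.symm, eq_comm]
  · rw [right_of_not_inTriangle hy]
    refine iff_of_false Sum.inr_ne_inl fun h => hy ?_
    rw [InTriangle]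
    tauto

theorem right_injective (hab₁ : a₁ ≠ b₁) (hbc₁ : b₁ ≠ c₁) (hac₁ : a₁ ≠ c₁)
    (hab₂ : a₂ ≠ b₂) (hbc₂ : b₂ ≠ c₂) (hac₂ : a₂ ≠ c₂) :
    (right a₁ b₁ c₁ a₂ b₂ c₂).Injective := by
  intro y y' h
  by_cases hy : InTriangle a₂ b₂ c₂ y
  · have hy' := right_of_inTriangle (a₁ := a₁) (b₁ := b₁) (c₁ := c₁) hy
    have hx := (right_eq_left_iff hab₂ hbc₂ hac₂).1 hy'
    have hx' := (right_eq_left_iff hab₂ hbc₂ hac₂).1 (h.symm.trans hy')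
    grind
  · have hy' : ¬ InTriangle a₂ b₂ c₂ y' := fun hy' => by
      have := (right_eq_left_iff hab₂ hbc₂ hac₂).1 (h.trans (right_of_inTriangle hy'))
      exact hy (by rw [InTriangle]; tauto)
    rw [right_of_not_inTriangle hy, right_of_not_inTriangle hy'] at h
    exact congrArg Subtype.val (Sum.inr_injective h)

theorem exists_left_or_right (v : GluedVert W₁ W₂ a₂ b₂ c₂) :
    (∃ x, v = left a₂ b₂ c₂ x)
      ∨ ∃ y, ¬ InTriangle a₂ b₂ c₂ y ∧ v = right a₁ b₁ c₁ a₂ b₂ c₂ y := by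
  rcases v with x | y
  · exact Or.inl ⟨x, rfl⟩
  · exact Or.inr ⟨y, y.2, (right_of_not_inTriangle y.2).symm⟩

end GluedVert

section GlueOnTriangles

variable {W₁ W₂ : Type*} {G₁ : SimpleGraph W₁} {G₂ : SimpleGraph W₂} {a₁ b₁ c₁ : W₁}
  {a₂ b₂ c₂ : W₂}

open GluedVert

theorem glueOnTriangles_adj_left_left {x x' : W₁} :
    (glueOnTriangles G₁ G₂ a₁ b₁ c₁ a₂ b₂ c₂).Adj (left a₂ b₂ c₂ x) (left a₂ b₂ c₂ x')
      ↔ (deleteTriangle G₁ a₁ b₁ c₁).Adj x x' := by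
  have hdef : (glueOnTriangles G₁ G₂ a₁ b₁ c₁ a₂ b₂ c₂).Adj (left a₂ b₂ c₂ x) (left a₂ b₂ c₂ x')
      ↔ left a₂ b₂ c₂ x ≠ left a₂ b₂ c₂ x'
        ∧ ((G₁.Adj x x' ∧ ¬ (InTriangle a₁ b₁ c₁ x ∧ InTriangle a₁ b₁ c₁ x'))
          ∨ (G₁.Adj x' x ∧ ¬ (InTriangle a₁ b₁ c₁ x' ∧ InTriangle a₁ b₁ c₁ x))) := Iff.rfl
  rw [hdef, left_injective.ne_iff, deleteTriangle_adj, G₁.adj_comm x' x,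
    and_comm (a := InTriangle a₁ b₁ c₁ x'), or_self]
  exact and_iff_right_of_imp fun hx => hx.1.ne

theorem glueOnTriangles_adj_left_right (hab : a₂ ≠ b₂) (hbc : b₂ ≠ c₂) (hac : a₂ ≠ c₂) {x : W₁}
    {y : W₂} (hy : ¬ InTriangle a₂ b₂ c₂ y) :
    (glueOnTriangles G₁ G₂ a₁ b₁ c₁ a₂ b₂ c₂).Adj (left a₂ b₂ c₂ x) (right a₁ b₁ c₁ a₂ b₂ c₂ y)
      ↔ ∃ y', right a₁ b₁ c₁ a₂ b₂ c₂ y' = left a₂ b₂ c₂ x ∧ G₂.Adj y' y := by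
  have hdef : (glueOnTriangles G₁ G₂ a₁ b₁ c₁ a₂ b₂ c₂).Adj (left a₂ b₂ c₂ x) (Sum.inr ⟨y, hy⟩)
      ↔ (Sum.inl x : W₁ ⊕ {z // ¬ InTriangle a₂ b₂ c₂ z}) ≠ Sum.inr ⟨y, hy⟩ ∧ ((x = a₁ ∧ G₂.Adj a₂ y
        ∨ x = b₁ ∧ G₂.Adj b₂ y ∨ x = c₁ ∧ G₂.Adj c₂ y) ∨ False) := Iff.rfl
  rw [right_of_not_inTriangle hy, hdef, or_false, and_iff_right Sum.inl_ne_inr]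
  simp only [right_eq_left_iff hab hbc hac, or_and_right, exists_or, and_assoc, exists_eq_left]

theorem glueOnTriangles_adj_right_right {y y' : W₂} (hy : ¬ InTriangle a₂ b₂ c₂ y)
    (hy' : ¬ InTriangle a₂ b₂ c₂ y') :
    (glueOnTriangles G₁ G₂ a₁ b₁ c₁ a₂ b₂ c₂).Adj
        (right a₁ b₁ c₁ a₂ b₂ c₂ y) (right a₁ b₁ c₁ a₂ b₂ c₂ y') ↔ G₂.Adj y y' := by
  have hdef : (glueOnTriangles G₁ G₂ a₁ b₁ c₁ a₂ b₂ c₂).Adj (Sum.inr ⟨y, hy⟩) (Sum.inr ⟨y', hy'⟩)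
      ↔ (Sum.inr ⟨y, hy⟩ : W₁ ⊕ {z // ¬ InTriangle a₂ b₂ c₂ z}) ≠ Sum.inr ⟨y', hy'⟩
        ∧ (G₂.Adj y y' ∨ G₂.Adj y' y) := Iff.rfl
  rw [right_of_not_inTriangle hy, right_of_not_inTriangle hy', hdef, G₂.adj_comm y' y, or_self]
  refine and_iff_right_of_imp fun hyy' h => hyy'.ne ?_
  exact congrArg Subtype.val (Sum.inr_injective h)

theorem map_right_le_glueOnTriangles (hab : a₂ ≠ b₂) (hbc : b₂ ≠ c₂) (hac : a₂ ≠ c₂) :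
    (deleteTriangle G₂ a₂ b₂ c₂).map (right a₁ b₁ c₁ a₂ b₂ c₂)
      ≤ glueOnTriangles G₁ G₂ a₁ b₁ c₁ a₂ b₂ c₂ := by
  rintro _ _ ⟨-, y, y', hadj, rfl, rfl⟩
  obtain ⟨hyy', hnot⟩ := deleteTriangle_adj.1 hadj
  by_cases hy : InTriangle a₂ b₂ c₂ y <;> by_cases hy' : InTriangle a₂ b₂ c₂ y'
  · exact absurd ⟨hy, hy'⟩ hnot
  · have hleft := right_of_inTriangle (a₁ := a₁) (b₁ := b₁) (c₁ := c₁) hy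
    rw [hleft]
    exact (glueOnTriangles_adj_left_right hab hbc hac hy').2 ⟨y, hleft, hyy'⟩
  · have hleft := right_of_inTriangle (a₁ := a₁) (b₁ := b₁) (c₁ := c₁) hy'
    rw [hleft]
    exact ((glueOnTriangles_adj_left_right hab hbc hac hy).2 ⟨y', hleft, hyy'.symm⟩).symm
  · exact (glueOnTriangles_adj_right_right hy hy').2 hyy'

theorem glueOnTriangles_eq_map_sup_map (hab : a₂ ≠ b₂) (hbc : b₂ ≠ c₂) (hac : a₂ ≠ c₂) :
    glueOnTriangles G₁ G₂ a₁ b₁ c₁ a₂ b₂ c₂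
      = (deleteTriangle G₁ a₁ b₁ c₁).map (left a₂ b₂ c₂)
        ⊔ (deleteTriangle G₂ a₂ b₂ c₂).map (right a₁ b₁ c₁ a₂ b₂ c₂) := by
  have hmixed {x : W₁} {y : W₂} (hy : ¬ InTriangle a₂ b₂ c₂ y)
      (hadj : (glueOnTriangles G₁ G₂ a₁ b₁ c₁ a₂ b₂ c₂).Adj (left a₂ b₂ c₂ x)
        (right a₁ b₁ c₁ a₂ b₂ c₂ y)) :
      ((deleteTriangle G₂ a₂ b₂ c₂).map (right a₁ b₁ c₁ a₂ b₂ c₂)).Adj (left a₂ b₂ c₂ x)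
        (right a₁ b₁ c₁ a₂ b₂ c₂ y) := by
    obtain ⟨y', hy', hyy'⟩ := (glueOnTriangles_adj_left_right hab hbc hac hy).1 hadj
    exact ⟨hadj.ne, y', y, deleteTriangle_adj.2 ⟨hyy', fun h => hy h.2⟩, hy', rfl⟩
  refine le_antisymm (fun u v hadj => ?_) (sup_le ?_ (map_right_le_glueOnTriangles hab hbc hac))
  · rcases exists_left_or_right (a₁ := a₁) (b₁ := b₁) (c₁ := c₁) u
      with ⟨x, rfl⟩ | ⟨y, hy, rfl⟩ <;>
      rcases exists_left_or_right (a₁ := a₁) (b₁ := b₁) (c₁ := c₁) v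
      with ⟨x', rfl⟩ | ⟨y', hy', rfl⟩
    · exact Or.inl ⟨hadj.ne, x, x', glueOnTriangles_adj_left_left.1 hadj, rfl, rfl⟩
    · exact Or.inr (hmixed hy' hadj)
    · exact Or.inr (hmixed hy hadj.symm).symm
    · exact Or.inr ⟨hadj.ne, y, y', deleteTriangle_adj.2
        ⟨(glueOnTriangles_adj_right_right hy hy').1 hadj, fun h => hy h.1⟩, rfl, rfl⟩
  · rintro _ _ ⟨-, x, x', hadj, rfl, rfl⟩
    exact glueOnTriangles_adj_left_left.2 hadj

theorem isTriangleGluing_glueOnTriangles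
    (ht₁ : G₁.Adj a₁ b₁ ∧ G₁.Adj b₁ c₁ ∧ G₁.Adj a₁ c₁)
    (ht₂ : G₂.Adj a₂ b₂ ∧ G₂.Adj b₂ c₂ ∧ G₂.Adj a₂ c₂) :
    IsTriangleGluing (glueOnTriangles G₁ G₂ a₁ b₁ c₁ a₂ b₂ c₂) G₁ G₂
      (left a₂ b₂ c₂) (right a₁ b₁ c₁ a₂ b₂ c₂) a₁ b₁ c₁ a₂ b₂ c₂ where
  triangle₁ := ht₁
  triangle₂ := ht₂
  injective₁ := left_injective
  injective₂ := right_injective ht₁.1.ne ht₁.2.1.ne ht₁.2.2.ne ht₂.1.ne ht₂.2.1.ne ht₂.2.2.ne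
  eq_iff x y := by
    rw [eq_comm, right_eq_left_iff ht₂.1.ne ht₂.2.1.ne ht₂.2.2.ne]
    simp only [and_comm]
  mem_range v := (exists_left_or_right v).imp (fun ⟨x, hx⟩ => ⟨x, hx.symm⟩)
    fun ⟨y, _, hy⟩ => ⟨y, hy.symm⟩
  eq_map_sup_map := glueOnTriangles_eq_map_sup_map ht₂.1.ne ht₂.2.1.ne ht₂.2.2.ne

end GlueOnTriangles

theorem period_glueOnTriangles_general {V V₁ V₂ E : Type*} [Fintype V] [Fintype V₁] [Fintype V₂]
    [NormedAddCommGroup E] [InnerProductSpace ℝ E] [FiniteDimensional ℝ E] [MeasurableSpace E]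
    [BorelSpace E] {G : SimpleGraph V} {G₁ : SimpleGraph V₁} {G₂ : SimpleGraph V₂} {i : V₁ → V}
    {j : V₂ → V} {a₁ b₁ c₁ : V₁} {a₂ b₂ c₂ : V₂}
    (h : IsTriangleGluing G G₁ G₂ i j a₁ b₁ c₁ a₂ b₂ c₂)
    (hG₁ : G₁.IsRegularOfDegree 4) (hG₂ : G₂.IsRegularOfDegree 4)
    {p : ℕ} (hp : 2 * p = Module.finrank ℝ E)
    {u w z : V} (huw : u ≠ w) (huz : u ≠ z) (hwz : w ≠ z) {e : E} (he : ‖e‖ = 1)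
    {u₁ w₁ z₁ : V₁} (huw₁ : u₁ ≠ w₁) (huz₁ : u₁ ≠ z₁) (hwz₁ : w₁ ≠ z₁) {e₁ : E} (he₁ : ‖e₁‖ = 1)
    {u₂ w₂ z₂ : V₂} (huw₂ : u₂ ≠ w₂) (huz₂ : u₂ ≠ z₂) (hwz₂ : w₂ ≠ z₂) {e₂ : E}
    (he₂ : ‖e₂‖ = 1) :
    extendedPeriod G p u w z e
      = extendedPeriod G₁ p u₁ w₁ z₁ e₁ * extendedPeriod G₂ p u₂ w₂ z₂ e₂ := by
  have hk : 4 * p = 2 * Module.finrank ℝ E := by omega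
  obtain ⟨hab₁, hbc₁, hac₁⟩ := h.triangle₁
  obtain ⟨hab₂, hbc₂, hac₂⟩ := h.triangle₂
  rw [extendedPeriod, extendedPeriod, extendedPeriod, h.card_sub_three, mul_add, pow_add,
    positionLIntegral_eq (h.isRegularOfDegree_four hG₁ hG₂) hk huw huz hwz
      (h.injective₁.ne hab₁.ne) (h.injective₁.ne hac₁.ne) (h.injective₁.ne hbc₁.ne) he he,
    h.positionLIntegral_eq_mul p he,
    positionLIntegral_eq hG₁ hk hab₁.ne hac₁.ne hbc₁.ne huw₁ huz₁ hwz₁ he he₁,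
    positionLIntegral_eq hG₂ hk hab₂.ne hac₂.ne hbc₂.ne huw₂ huz₂ hwz₂ he he₂,
    ENNReal.ofReal_mul (by positivity), ENNReal.mul_inv (by simp) (by simp), mul_mul_mul_comm]

/-- **Product identity.** The period of the gluing of two completed primitive graphs along
triangles (with the triangle edges deleted) is the product of the two periods, for every
admissible choice of the three marked vertices and unit vectors. -/
theorem period_glueOnTriangles {W₁ W₂ : Type*} [Fintype W₁] [Fintype W₂]
    (G₁ : SimpleGraph W₁) (G₂ : SimpleGraph W₂)
    (h₁ : CompletedPrimitive G₁) (h₂ : CompletedPrimitive G₂)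
    (a₁ b₁ c₁ : W₁) (a₂ b₂ c₂ : W₂)
    (ht₁ : G₁.Adj a₁ b₁ ∧ G₁.Adj b₁ c₁ ∧ G₁.Adj a₁ c₁)
    (ht₂ : G₂.Adj a₂ b₂ ∧ G₂.Adj b₂ c₂ ∧ G₂.Adj a₂ c₂) :
    ∀ (u w z : GluedVert W₁ W₂ a₂ b₂ c₂) (e : R4)
      (u₁ w₁ z₁ : W₁) (e₁ : R4) (u₂ w₂ z₂ : W₂) (e₂ : R4),
      u ≠ w → u ≠ z → w ≠ z → ‖e‖ = 1 →
      u₁ ≠ w₁ → u₁ ≠ z₁ → w₁ ≠ z₁ → ‖e₁‖ = 1 →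
      u₂ ≠ w₂ → u₂ ≠ z₂ → w₂ ≠ z₂ → ‖e₂‖ = 1 →
      period (glueOnTriangles G₁ G₂ a₁ b₁ c₁ a₂ b₂ c₂) u w z e =
        period G₁ u₁ w₁ z₁ e₁ * period G₂ u₂ w₂ z₂ e₂ := by
  intro u w z e u₁ w₁ z₁ e₁ u₂ w₂ z₂ e₂ huw huz hwz he huw₁ huz₁ hwz₁ he₁ huw₂ huz₂ hwz₂ he₂
  rw [period_eq_toReal_extendedPeriod _ huw huz hwz,
    period_eq_toReal_extendedPeriod _ huw₁ huz₁ hwz₁,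
    period_eq_toReal_extendedPeriod _ huw₂ huz₂ hwz₂, ← ENNReal.toReal_mul,
    period_glueOnTriangles_general (isTriangleGluing_glueOnTriangles ht₁ ht₂) h₁.1 h₂.1 (by simp)
      huw huz hwz he huw₁ huz₁ hwz₁ he₁ huw₂ huz₂ hwz₂ he₂]
end
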